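/- arXiv:1810.05707 — 3 statements merged into one kernel-verified Lean document; each statement's English description precedes it below -/
import Mathlib

section
/- Fix 1 < p < ∞, natural numbers l_1,…,l_d, 0 < μ < 1, λ, Θ > 0, and M > λ/Θ. Then for any 0 < η₁ < 1 there exists 0 < η < η₁ with the following property: for any natural number l_{d+1}, if T is the (l_1,…,l_{d+1}) interval tree with levels Λ_0,…,Λ_{d+1} and (r_I)_{I∈T}, (s_I)_{I∈T} are nonnegative real numbers such that (i) r_I ≤ λ·s_I for each I ∈ T; (ii) r_I ≤ ∑_{J⁻=I} r_J and s_I ≤ ∑_{J⁻=I} s_J for each I ∈ T \ Λ_{d+1}; (iii) r_I^p ≤ (1+η)Θ^p·l_{d+1}^{p−1}·∑_{J⁻=I} s_J^p for each I ∈ Λ_d; and (iv) r_{[L]}^p > (1−η)Θ^p·(∏_{i=1}^{d+1} l_i^{p−1})·∑_{I∈Λ_{d+1}} s_I^p, where [L] is the root; then for every 0 ≤ j ≤ d, max_{I∈Λ_j} s_I ≤ M·min_{I∈Λ_j} s_I, and for every 0 ≤ i < d and every I₁ ∈ Λ_i, r_{I₁}^p > (1−μ)·l_{i+1}^{p−1}·∑_{J⁻=I₁}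 r_J^p. -/
/-!
Write `N = |Λ_d|`, `R = r_[L]` and `a = R / N`. Summing (iii) over `Λ_d` and comparing with (iv)
gives `∑_{Λ_d} r_I ^ p ≤ (1+η)/(1-η) * N * a ^ p`, while (ii) gives `∑_{Λ_d} r_I ≥ N * a`. So the
power mean inequality on `Λ_d` is almost an equality, and strict convexity forces
`r_I ≤ (1 + ε/N) * a` on `Λ_d`. By (ii) this upper bound passes up to every level, and since the sum
of `r` over `Λ_j` is at least `R`, it implies the lower bound `r_I ≥ (1-ε) * R / |Λ_j|`. These two
bounds give the second conclusion.

For the first, (iii) bounds each block `∑_{J⁻=I} s_J ^ p` from below, almost by the average that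
(iv) allows, so no block can much exceed that average. Hölder's inequality then bounds `s_I` on
`Λ_d`, hence on all levels, by nearly `(1/Θ) * R / |Λ_j|`; comparison with `s_I ≥ r_I / λ` gives the
ratio `λ / Θ < M` up to a factor close to `1`.
-/

open Finset

noncomputable section

/-!
The `(l 1, …, l (d+1))` interval tree is encoded as follows: the nodes at level `j`
(for `0 ≤ j ≤ d+1`) are indexed by the natural numbers `k < levN l j`, where
`levN l j = l 1 * ⋯ * l j` is the cardinality of the `j`-th level `Λ_j`.  The children of the
node `k` at level `j` are the nodes `k * l (j+1) + t`, `t < l (j+1)`, at level `j+1`, and the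
root (the interval `[L]`) is the node `0` at level `0`.  A family `(x_I)_{I ∈ T}` of reals
indexed by the tree is encoded as `x : ℕ → ℕ → ℝ`, with `x j k` the value at node `k` of
level `j`.
-/

/-- Cardinality of the `j`-th level `Λ_j` of the interval tree. -/
def levN (l : ℕ → ℕ) (j : ℕ) : ℕ := ∏ i ∈ Finset.Icc 1 j, l i

/-- `∑_{J⁻ = I} x_J`, the sum of `x` over the children of node `k` at level `j`. -/
def childSum (l : ℕ → ℕ) (x : ℕ → ℕ → ℝ) (j k : ℕ) : ℝ :=
  ∑ t ∈ Finset.range (l (j + 1)), x (j + 1) (k * l (j + 1) + t)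

/-- `∑_{J⁻ = I} x_J ^ p`, the sum of `x^p` over the children of node `k` at level `j`. -/
def childSumPow (l : ℕ → ℕ) (x : ℕ → ℕ → ℝ) (p : ℝ) (j k : ℕ) : ℝ :=
  ∑ t ∈ Finset.range (l (j + 1)), x (j + 1) (k * l (j + 1) + t) ^ p

section Blocks

lemma sum_range_sum_range_mul_add {A : Type*} [AddCommMonoid A] (f : ℕ → A) (a b : ℕ) :
    ∑ k ∈ range a, ∑ t ∈ range b, f (k * b + t) = ∑ m ∈ range (a * b), f m := by
  induction a with
  | zero => simp
  | succ a ih => rw [sum_range_succ, ih, Nat.succ_mul, sum_range_add]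

variable {ι A : Type*} [AddCommGroup A] [PartialOrder A] [IsOrderedAddMonoid A]
  {s : Finset ι} {x : ι → A} {b : A} {k : ι}

lemma le_sum_sub_card_sub_one_nsmul (hx : ∀ i ∈ s, b ≤ x i) (hk : k ∈ s) :
    x k ≤ ∑ i ∈ s, x i - (#s - 1) • b := by
  classical
  rw [le_sub_iff_add_le, ← add_sum_erase s x hk, ← card_erase_of_mem hk]
  gcongr
  exact card_nsmul_le_sum _ _ _ fun i hi ↦ hx i (mem_of_mem_erase hi)

lemma sum_sub_card_sub_one_nsmul_le (hx : ∀ i ∈ s, x i ≤ b) (hk : k ∈ s) :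
    ∑ i ∈ s, x i - (#s - 1) • b ≤ x k :=
  le_sum_sub_card_sub_one_nsmul (A := Aᵒᵈ) hx hk

end Blocks

section PowerMean

variable {p : ℝ}

lemma mul_rpow_eq_rpow_sub_one_mul {x y : ℝ} (hx : 0 < x) (hy : 0 ≤ y) :
    (x * y) ^ p = x ^ (p - 1) * (x * y ^ p) := by
  rw [Real.mul_rpow hx.le hy, Real.rpow_sub_one hx.ne']
  field_simp

lemma rpow_add_mul_sub_le_rpow {u t : ℝ} (hp : 1 ≤ p) (hu : 0 < u) (ht : 0 ≤ t) :
    u ^ p + p * u ^ (p - 1) * (t - u) ≤ t ^ p := by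
  have bernoulli : 1 + p * (t / u - 1) ≤ (t / u) ^ p := by
    simpa using one_add_mul_self_le_rpow_one_add (s := t / u - 1)
      (by linarith [div_nonneg ht hu.le]) hp
  rw [Real.div_rpow ht hu.le, le_div_iff₀ (by positivity)] at bernoulli
  refine le_of_eq_of_le ?_ bernoulli
  rw [Real.rpow_sub_one hu.ne']
  field_simp

/-- The gap in Bernoulli's inequality: the excess of `t ^ p` over its tangent line at `t = 1`. It
measures how far a family of mean at least `1` is from equality in the power mean inequality. -/
def bernoulliGap (p t : ℝ) : ℝ := t ^ p - (1 + p * (t - 1))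

lemma bernoulliGap_nonneg {t : ℝ} (hp : 1 ≤ p) (ht : 0 ≤ t) : 0 ≤ bernoulliGap p t := by
  simpa [bernoulliGap] using rpow_add_mul_sub_le_rpow hp one_pos ht

lemma bernoulliGap_pos {t : ℝ} (hp : 1 < p) (ht : 0 ≤ t) (ht1 : t ≠ 1) : 0 < bernoulliGap p t := by
  simpa [bernoulliGap] using
    one_add_mul_self_lt_rpow_one_add (s := t - 1) (by linarith) (sub_ne_zero.2 ht1) hp

lemma bernoulliGap_mono {u t : ℝ} (hp : 1 ≤ p) (hu : 1 ≤ u) (hut : u ≤ t) :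
    bernoulliGap p u ≤ bernoulliGap p t := by
  have tangent := rpow_add_mul_sub_le_rpow hp (by linarith : 0 < u) (by linarith : 0 ≤ t)
  have slope : p * (t - u) ≤ p * u ^ (p - 1) * (t - u) := by
    have : 1 ≤ u ^ (p - 1) := Real.one_le_rpow hu (by linarith)
    exact mul_le_mul_of_nonneg_right (le_mul_of_one_le_right (by linarith) this) (by linarith)
  simp only [bernoulliGap]
  linarith

variable {ι : Type*} {s : Finset ι} {x : ι → ℝ}

lemma pos_of_mul_sum_rpow_lt_rpow {c R : ℝ} (hp : p ≠ 0) (hc : 0 ≤ c) (hx : ∀ i ∈ s, 0 ≤ x i)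
    (hR : 0 ≤ R) (h : c * ∑ i ∈ s, x i ^ p < R ^ p) : 0 < R := by
  have : 0 ≤ ∑ i ∈ s, x i ^ p := sum_nonneg fun i hi ↦ Real.rpow_nonneg (hx i hi) p
  refine hR.lt_of_ne' fun hR0 ↦ h.not_ge ?_
  rw [hR0, Real.zero_rpow hp]
  positivity

lemma lt_of_sum_rpow_lt_card_add_bernoulliGap {u : ℝ} (hp : 1 ≤ p) (hu : 1 ≤ u)
    (hx : ∀ i ∈ s, 0 ≤ x i) (hsum : #s ≤ ∑ i ∈ s, x i)
    (hpow : ∑ i ∈ s, x i ^ p < #s + bernoulliGap p u) : ∀ k ∈ s, x k < u := by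
  intro k hk
  by_contra! huk
  have total : ∑ i ∈ s, bernoulliGap p (x i)
      = ∑ i ∈ s, x i ^ p - #s - p * (∑ i ∈ s, x i - #s) := by
    simp [bernoulliGap, ← mul_sum, sub_add_eq_sub_sub]
  have excess : 0 ≤ p * (∑ i ∈ s, x i - #s) := mul_nonneg (by linarith) (by linarith)
  have := calc bernoulliGap p u
    _ ≤ bernoulliGap p (x k) := bernoulliGap_mono hp hu huk
    _ ≤ ∑ i ∈ s, bernoulliGap p (x i) :=
      single_le_sum (f := fun i ↦ bernoulliGap p (x i))
        (fun i hi ↦ bernoulliGap_nonneg hp (hx i hi)) hk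
  linarith

lemma lt_mul_of_sum_rpow_lt {a u : ℝ} (hp : 1 ≤ p) (hu : 1 ≤ u) (ha : 0 < a)
    (hx : ∀ i ∈ s, 0 ≤ x i) (hsum : #s * a ≤ ∑ i ∈ s, x i)
    (hpow : ∑ i ∈ s, x i ^ p < (#s + bernoulliGap p u) * a ^ p) : ∀ k ∈ s, x k < u * a := by
  intro k hk
  rw [← div_lt_iff₀ ha]
  refine lt_of_sum_rpow_lt_card_add_bernoulliGap hp hu (fun i hi ↦ div_nonneg (hx i hi) ha.le)
    ?_ ?_ k hk
  · rwa [← sum_div, le_div_iff₀ ha]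
  · rw [sum_congr rfl fun i hi ↦ Real.div_rpow (hx i hi) ha.le p, ← sum_div,
      div_lt_iff₀ (by positivity)]
    exact hpow

end PowerMean

section IntervalTree

variable {l : ℕ → ℕ} {d : ℕ}

lemma levN_succ (l : ℕ → ℕ) (j : ℕ) : levN l (j + 1) = levN l j * l (j + 1) :=
  prod_Icc_succ_top (by omega) _

lemma levN_dvd_levN {j : ℕ} (hj : j ≤ d) : levN l j ∣ levN l d :=
  prod_dvd_prod_of_subset _ _ _ (Icc_subset_Icc_right hj)

lemma levN_pos_of_le {j : ℕ} (hd : 0 < levN l d) (hj : j ≤ d) : 0 < levN l j :=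
  Nat.pos_of_dvd_of_pos (levN_dvd_levN hj) hd

lemma pos_of_levN_succ_pos {j : ℕ} (h : 0 < levN l (j + 1)) : 0 < l (j + 1) :=
  Nat.pos_of_mul_pos_left (levN_succ l j ▸ h)

lemma child_lt_levN_succ {j k t : ℕ} (hk : k < levN l j) (ht : t < l (j + 1)) :
    k * l (j + 1) + t < levN l (j + 1) := by
  rw [levN_succ]
  nlinarith

lemma mul_div_levN_succ {j : ℕ} (h : 0 < levN l (j + 1)) (K : ℝ) :
    l (j + 1) * (K / levN l (j + 1)) = K / levN l j := by
  have : (l (j + 1) : ℝ) ≠ 0 := mod_cast (pos_of_levN_succ_pos h).ne'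
  rw [levN_succ]
  push_cast
  field_simp

/-- The inequality `x_I ≤ ∑_{J⁻ = I} x_J` at all nodes `I` of the levels `Λ_0, …, Λ_{d-1}`. -/
def TreeSubadditive (l : ℕ → ℕ) (x : ℕ → ℕ → ℝ) (d : ℕ) : Prop :=
  ∀ j < d, ∀ k < levN l j, x j k ≤ childSum l x j k

namespace TreeSubadditive

variable {x : ℕ → ℕ → ℝ}

lemma le_div_levN (h : TreeSubadditive l x d) (hN : 0 < levN l d) {K : ℝ}
    (hd : ∀ k < levN l d, x d k ≤ K / levN l d) :
    ∀ j ≤ d, ∀ k < levN l j, x j k ≤ K / levN l j := by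
  intro j hj
  induction hj using Nat.decreasingInduction with
  | self => exact hd
  | of_succ j hj ih =>
    intro k hk
    calc x j k
      _ ≤ ∑ t ∈ range (l (j + 1)), x (j + 1) (k * l (j + 1) + t) := h j hj k hk
      _ ≤ ∑ _t ∈ range (l (j + 1)), K / levN l (j + 1) :=
        sum_le_sum fun t ht ↦ ih _ (child_lt_levN_succ hk (mem_range.1 ht))
      _ = K / levN l j := by
        rw [sum_const, card_range, nsmul_eq_mul, mul_div_levN_succ (levN_pos_of_le hN hj)]

lemma root_le_sum (h : TreeSubadditive l x d) :
    ∀ j ≤ d, x 0 0 ≤ ∑ k ∈ range (levN l j), x j k := by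
  intro j
  induction j with
  | zero => simp [levN]
  | succ j ih =>
    intro hj
    calc x 0 0
      _ ≤ ∑ k ∈ range (levN l j), x j k := ih (by omega)
      _ ≤ ∑ k ∈ range (levN l j), childSum l x j k :=
        sum_le_sum fun k hk ↦ h j (by omega) k (mem_range.1 hk)
      _ = ∑ k ∈ range (levN l (j + 1)), x (j + 1) k := by
        rw [levN_succ]
        exact sum_range_sum_range_mul_add _ _ _

end TreeSubadditive

/-- `l_{j+1} ^ (p-1) * ∑_{J⁻ = I} x_J ^ p` at the node `k` of level `j`: the upper bound that
Hölder's inequality gives for `(∑_{J⁻ = I} x_J) ^ p`. -/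
def scaledChildSumPow (l : ℕ → ℕ) (x : ℕ → ℕ → ℝ) (p : ℝ) (j k : ℕ) : ℝ :=
  (l (j + 1) : ℝ) ^ (p - 1) * childSumPow l x p j k

section ScaledChildSumPow

variable {x : ℕ → ℕ → ℝ} {p : ℝ} {j k : ℕ}

lemma rpow_childSum_le (hp : 1 ≤ p) (hk : k < levN l j)
    (hx : ∀ m < levN l (j + 1), 0 ≤ x (j + 1) m) :
    childSum l x j k ^ p ≤ scaledChildSumPow l x p j k := by
  simpa [childSum, scaledChildSumPow, childSumPow] using
    Real.rpow_sum_le_const_mul_sum_rpow_of_nonneg (range (l (j + 1))) hp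
      fun t ht ↦ hx _ (child_lt_levN_succ hk (mem_range.1 ht))

lemma mul_le_of_rpow_mul_scaledChildSumPow_le {c b : ℝ} (hp : 1 ≤ p) (hc : 0 ≤ c) (hb : 0 ≤ b)
    (hk : k < levN l j) (hx : ∀ m < levN l (j + 1), 0 ≤ x (j + 1) m) (hxk : 0 ≤ x j k)
    (hsub : x j k ≤ childSum l x j k) (h : c ^ p * scaledChildSumPow l x p j k ≤ b ^ p) :
    c * x j k ≤ b := by
  have hp0 : 0 < p := by linarith
  rw [← Real.rpow_le_rpow_iff (by positivity) hb hp0]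
  calc (c * x j k) ^ p
    _ = c ^ p * x j k ^ p := Real.mul_rpow hc hxk
    _ ≤ c ^ p * childSum l x j k ^ p := by gcongr
    _ ≤ c ^ p * scaledChildSumPow l x p j k := by
      gcongr
      exact rpow_childSum_le hp hk hx
    _ ≤ b ^ p := h

lemma scaledChildSumPow_le {b : ℝ} (hp : 0 ≤ p) (hl : 0 < l (j + 1)) (hk : k < levN l j)
    (hx : ∀ m < levN l (j + 1), 0 ≤ x (j + 1) m) (hb : ∀ m < levN l (j + 1), x (j + 1) m ≤ b) :
    scaledChildSumPow l x p j k ≤ (l (j + 1) * b) ^ p := by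
  have hchild {t : ℕ} (ht : t ∈ range (l (j + 1))) := child_lt_levN_succ hk (mem_range.1 ht)
  have hb0 : 0 ≤ b := (hx _ (hchild (mem_range.2 hl))).trans (hb _ (hchild (mem_range.2 hl)))
  rw [mul_rpow_eq_rpow_sub_one_mul (by exact_mod_cast hl) hb0, scaledChildSumPow, childSumPow]
  gcongr
  simpa using sum_le_card_nsmul (range (l (j + 1))) _ (b ^ p) fun t ht ↦
    Real.rpow_le_rpow (hx _ (hchild ht)) (hb _ (hchild ht)) hp

lemma prod_rpow_mul_sum_rpow (l : ℕ → ℕ) (x : ℕ → ℕ → ℝ) (p : ℝ) (d : ℕ) :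
    (∏ i ∈ Icc 1 (d + 1), (l i : ℝ) ^ (p - 1)) * ∑ k ∈ range (levN l (d + 1)), x (d + 1) k ^ p
      = (levN l d : ℝ) ^ (p - 1) * ∑ k ∈ range (levN l d), scaledChildSumPow l x p d k := by
  have prod_eq : ∏ i ∈ Icc 1 (d + 1), (l i : ℝ) ^ (p - 1)
      = (levN l d : ℝ) ^ (p - 1) * (l (d + 1) : ℝ) ^ (p - 1) := by
    rw [prod_Icc_succ_top (by omega), Real.finsetProd_rpow _ _ fun i _ ↦ Nat.cast_nonneg _, levN,
      Nat.cast_prod]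
  have sum_eq : ∑ k ∈ range (levN l (d + 1)), x (d + 1) k ^ p
      = ∑ k ∈ range (levN l d), childSumPow l x p d k := by
    rw [levN_succ, ← sum_range_sum_range_mul_add]
    rfl
  simp only [scaledChildSumPow]
  rw [prod_eq, sum_eq, ← mul_sum, mul_assoc]

lemma mul_sum_scaledChildSumPow_le {c R : ℝ} (hN : 0 < levN l d) (hR : 0 ≤ R)
    (h : c * (∏ i ∈ Icc 1 (d + 1), (l i : ℝ) ^ (p - 1)) *
      ∑ k ∈ range (levN l (d + 1)), x (d + 1) k ^ p ≤ R ^ p) :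
    c * ∑ k ∈ range (levN l d), scaledChildSumPow l x p d k
      ≤ levN l d * (R / levN l d) ^ p := by
  have hN' : (0 : ℝ) < levN l d := mod_cast hN
  rw [mul_assoc, prod_rpow_mul_sum_rpow, ← mul_div_cancel₀ R hN'.ne',
    mul_rpow_eq_rpow_sub_one_mul hN' (by positivity), mul_left_comm] at h
  exact le_of_mul_le_mul_left h (by positivity)

end ScaledChildSumPow

/-- On each of the levels `Λ_0, …, Λ_d`, every `x_I` lies within a factor `1 ± ε` of
`x_[L] / |Λ_j|`, the value it would have if `x_[L]` were equally distributed over the level. -/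
def NearlyFlat (l : ℕ → ℕ) (x : ℕ → ℕ → ℝ) (d : ℕ) (ε : ℝ) : Prop :=
  ∀ j ≤ d, ∀ k < levN l j,
    x j k ∈ Set.Icc ((1 - ε) * (x 0 0 / levN l j)) ((1 + ε) * (x 0 0 / levN l j))

namespace NearlyFlat

variable {r s : ℕ → ℕ → ℝ} {p ε : ℝ}

lemma of_le (hsub : TreeSubadditive l r d) (hN : 0 < levN l d) (hR : 0 ≤ r 0 0) (hε : 0 ≤ ε)
    (hup : ∀ k < levN l d, r d k ≤ (1 + ε / levN l d) * (r 0 0 / levN l d)) :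
    NearlyFlat l r d ε := by
  intro j hj k hk
  have hn1 : 1 ≤ levN l j := levN_pos_of_le hN hj
  have hn : (0 : ℝ) < levN l j := mod_cast hn1
  have hnN : (levN l j : ℝ) ≤ levN l d := mod_cast Nat.le_of_dvd hN (levN_dvd_levN hj)
  have hN' : (0 : ℝ) < levN l d := hn.trans_le hnN
  set δ := ε / levN l d with hδ
  set a := r 0 0 / levN l j with ha
  have hup_j : ∀ m ∈ range (levN l j), r j m ≤ (1 + δ) * a := fun m hm ↦ by
    simp only [← mul_div_assoc] at hup
    simpa only [ha, mul_div_assoc] using hsub.le_div_levN hN hup j hj m (mem_range.1 hm)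
  constructor
  · calc (1 - ε) * a
      _ ≤ (1 - (levN l j - 1) * δ) * a := by
        have : (levN l j - 1) * δ ≤ levN l d * δ := by gcongr; linarith
        rw [hδ, mul_div_cancel₀ _ hN'.ne', ← hδ] at this
        gcongr
      _ = r 0 0 - (levN l j - 1 : ℕ) • ((1 + δ) * a) := by
        rw [← mul_div_cancel₀ (r 0 0) hn.ne', ← ha, nsmul_eq_mul, Nat.cast_sub hn1, Nat.cast_one]
        ring
      _ ≤ ∑ m ∈ range (levN l j), r j m - (levN l j - 1 : ℕ) • ((1 + δ) * a) := by
        gcongr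
        exact hsub.root_le_sum j hj
      _ ≤ r j k := by
        simpa using sum_sub_card_sub_one_nsmul_le hup_j (mem_range.2 hk)
  · have : δ ≤ ε := div_le_self hε (by exact_mod_cast hN)
    exact (hup_j k (mem_range.2 hk)).trans (by gcongr)

lemma of_sum_rpow_lt (hp : 1 ≤ p) (hsub : TreeSubadditive l r d) (hN : 0 < levN l d)
    (hR : 0 < r 0 0) (hr : ∀ k < levN l d, 0 ≤ r d k) (hε : 0 ≤ ε)
    (hpow : ∑ k ∈ range (levN l d), r d k ^ p
      < (levN l d + bernoulliGap p (1 + ε / levN l d)) * (r 0 0 / levN l d) ^ p) :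
    NearlyFlat l r d ε := by
  have hN' : (0 : ℝ) < levN l d := mod_cast hN
  refine of_le hsub hN hR.le hε fun k hk ↦ le_of_lt ?_
  refine lt_mul_of_sum_rpow_lt (s := range (levN l d)) hp (le_add_of_nonneg_right (by positivity))
    (by positivity) (fun i hi ↦ hr i (mem_range.1 hi)) ?_ ?_ k (mem_range.2 hk)
  · rw [card_range, mul_div_cancel₀ _ hN'.ne']
    exact hsub.root_le_sum d le_rfl
  · rwa [card_range]

lemma mul_scaledChildSumPow_lt {c : ℝ} (h : NearlyFlat l r d ε) (hp : 0 ≤ p) (hN : 0 < levN l d)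
    (hR : 0 < r 0 0) (hr : ∀ j ≤ d, ∀ k < levN l j, 0 ≤ r j k) (hε : 0 ≤ ε) (hε1 : ε ≤ 1)
    (hc : 0 ≤ c) (hcε : c * (1 + ε) ^ p < (1 - ε) ^ p) {i k : ℕ} (hi : i < d)
    (hk : k < levN l i) : c * scaledChildSumPow l r p i k < r i k ^ p := by
  have hNi : (0 : ℝ) < levN l i := mod_cast levN_pos_of_le hN hi.le
  have hN_succ : 0 < levN l (i + 1) := levN_pos_of_le hN hi
  set a := r 0 0 / levN l i
  have ha0 : 0 < a := by positivity
  have upper : scaledChildSumPow l r p i k ≤ ((1 + ε) * a) ^ p := by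
    have := scaledChildSumPow_le hp (pos_of_levN_succ_pos hN_succ) hk (hr _ hi)
      fun m hm ↦ (h _ hi m hm).2
    rwa [mul_left_comm, mul_div_levN_succ hN_succ] at this
  calc c * scaledChildSumPow l r p i k
    _ ≤ c * ((1 + ε) * a) ^ p := by gcongr
    _ = c * (1 + ε) ^ p * a ^ p := by rw [Real.mul_rpow (by positivity) ha0.le, mul_assoc]
    _ < (1 - ε) ^ p * a ^ p := by gcongr
    _ = ((1 - ε) * a) ^ p := (Real.mul_rpow (by linarith) ha0.le).symm
    _ ≤ r i k ^ p := by
      have : 0 ≤ 1 - ε := by linarith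
      gcongr
      exact (h i hi.le k hk).1

lemma le_mul_of_le {c C : ℝ} (h : NearlyFlat l r d ε) (hsub : TreeSubadditive l s d)
    (hN : 0 < levN l d) (hC : 0 ≤ C) (hrs : ∀ j ≤ d, ∀ k < levN l j, r j k ≤ c * s j k)
    (hsd : ∀ k < levN l d, s d k ≤ C * ((1 - ε) * (r 0 0 / levN l d))) :
    ∀ j ≤ d, ∀ k < levN l j, ∀ k' < levN l j, s j k ≤ C * c * s j k' := by
  intro j hj k hk k' hk'
  simp only [← mul_div_assoc] at hsd
  calc s j k
    _ ≤ C * ((1 - ε) * r 0 0) / levN l j := hsub.le_div_levN hN hsd j hj k hk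
    _ = C * ((1 - ε) * (r 0 0 / levN l j)) := by ring
    _ ≤ C * (c * s j k') :=
      mul_le_mul_of_nonneg_left ((h j hj k' hk').1.trans (hrs j hj k' hk')) hC
    _ = C * c * s j k' := by ring

end NearlyFlat

end IntervalTree

/-- The smallness conditions on the flatness `ε` and the defect `η`. Here `N` stands for
`|Λ_d|`, and `Q > 1` for `M / (λ / Θ)`, the room left for the oscillation of `s`. -/
structure Admissible (p : ℝ) (N : ℕ) (μ Q ε η : ℝ) : Prop where
  eps_pos : 0 < ε
  eps_lt_one : ε < 1
  eta_pos : 0 < η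
  eta_lt_one : η < 1
  sum_lt : N * ((1 + η) / (1 - η)) < N + bernoulliGap p (1 + ε / N)
  block_lt : N / (1 - η) - (N - 1) * ((1 - ε) ^ p / (1 + η)) < (Q * (1 - ε)) ^ p
  child_lt : (1 - μ) * (1 + ε) ^ p < (1 - ε) ^ p

namespace Admissible

variable {p μ Q ε η a : ℝ} {N : ℕ} {x E : ℕ → ℝ}

lemma sum_rpow_lt (h : Admissible p N μ Q ε η) (ha : 0 < a)
    (hxE : ∀ k < N, x k ^ p ≤ (1 + η) * E k) (hE : (1 - η) * ∑ k ∈ range N, E k ≤ N * a ^ p) :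
    ∑ k ∈ range N, x k ^ p < (N + bernoulliGap p (1 + ε / N)) * a ^ p := by
  have h_sub : 0 < 1 - η := sub_pos.2 h.eta_lt_one
  have h_add : 0 < 1 + η := by linarith [h.eta_pos]
  calc ∑ k ∈ range N, x k ^ p
    _ ≤ (1 + η) * ∑ k ∈ range N, E k := by
      rw [mul_sum]
      exact sum_le_sum fun k hk ↦ hxE k (mem_range.1 hk)
    _ ≤ (1 + η) * (N * a ^ p / (1 - η)) := by
      gcongr
      rwa [le_div_iff₀' h_sub]
    _ = N * ((1 + η) / (1 - η)) * a ^ p := by ring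
    _ < (N + bernoulliGap p (1 + ε / N)) * a ^ p := by
      gcongr
      exact h.sum_lt

lemma block_le (h : Admissible p N μ Q ε η) (hp : 0 ≤ p) (hQ : 0 ≤ Q) (ha : 0 ≤ a)
    (hxE : ∀ k < N, x k ^ p ≤ (1 + η) * E k) (hE : (1 - η) * ∑ k ∈ range N, E k ≤ N * a ^ p)
    (hx : ∀ k < N, (1 - ε) * a ≤ x k) : ∀ k < N, E k ≤ (Q * ((1 - ε) * a)) ^ p := by
  intro k hk
  have h_eps : 0 ≤ 1 - ε := sub_nonneg.2 h.eps_lt_one.le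
  have h_sub : 0 < 1 - η := sub_pos.2 h.eta_lt_one
  have h_add : 0 < 1 + η := by linarith [h.eta_pos]
  have lower : ∀ i ∈ range N, (1 - ε) ^ p / (1 + η) * a ^ p ≤ E i := fun i hi ↦ by
    rw [div_mul_eq_mul_div, div_le_iff₀' h_add, ← Real.mul_rpow h_eps ha]
    exact (Real.rpow_le_rpow (by positivity) (hx i (mem_range.1 hi)) hp).trans
      (hxE i (mem_range.1 hi))
  calc E k
    _ ≤ ∑ i ∈ range N, E i - (N - 1 : ℕ) • ((1 - ε) ^ p / (1 + η) * a ^ p) := by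
      simpa using le_sum_sub_card_sub_one_nsmul lower (mem_range.2 hk)
    _ ≤ N * a ^ p / (1 - η) - (N - 1 : ℕ) • ((1 - ε) ^ p / (1 + η) * a ^ p) := by
      gcongr
      rwa [le_div_iff₀' h_sub]
    _ = (N / (1 - η) - (N - 1) * ((1 - ε) ^ p / (1 + η))) * a ^ p := by
      rw [nsmul_eq_mul, Nat.cast_sub (by omega), Nat.cast_one]
      ring
    _ ≤ (Q * (1 - ε)) ^ p * a ^ p := by
      gcongr
      exact h.block_lt.le
    _ = (Q * ((1 - ε) * a)) ^ p := by
      rw [← Real.mul_rpow (by positivity) ha, mul_assoc]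

lemma le_of_nearlyFlat {l : ℕ → ℕ} {d : ℕ} {r s : ℕ → ℕ → ℝ} {Θ : ℝ}
    (h : Admissible p (levN l d) μ Q ε η) (hp : 1 ≤ p) (hQ : 0 ≤ Q) (hΘ : 0 < Θ)
    (hflat : NearlyFlat l r d ε) (hR : 0 ≤ r 0 0)
    (hs : ∀ j ≤ d + 1, ∀ k < levN l j, 0 ≤ s j k) (hsub : ∀ k < levN l d, s d k ≤ childSum l s d k)
    (hrs : ∀ k < levN l d, r d k ^ p ≤ (1 + η) * (Θ ^ p * scaledChildSumPow l s p d k))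
    (hsum : (1 - η) * ∑ k ∈ range (levN l d), Θ ^ p * scaledChildSumPow l s p d k
      ≤ levN l d * (r 0 0 / levN l d) ^ p) :
    ∀ k < levN l d, s d k ≤ Q / Θ * ((1 - ε) * (r 0 0 / levN l d)) := by
  intro k hk
  have h_eps : 0 ≤ 1 - ε := sub_nonneg.2 h.eps_lt_one.le
  rw [div_mul_eq_mul_div, le_div_iff₀' hΘ]
  exact mul_le_of_rpow_mul_scaledChildSumPow_le hp hΘ.le (by positivity) hk (hs _ le_rfl)
    (hs d (by omega) k hk) (hsub k hk) <|
    h.block_le (by linarith) hQ (by positivity) hrs hsum (fun m hm ↦ (hflat d le_rfl m hm).1) k hk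

open Filter Topology in
lemma exists_of_lt (hp : 1 < p) (hN : 0 < N) (hμ : 0 < μ) (hQ : 1 < Q) {η₁ : ℝ} (hη₁ : 0 < η₁)
    (hη₁1 : η₁ ≤ 1) : ∃ ε η, η < η₁ ∧ Admissible p N μ Q ε η := by
  have hp0 : 0 ≤ p := by linarith
  have child : ∀ᶠ ε : ℝ in 𝓝[>] 0, (1 - μ) * (1 + ε) ^ p < (1 - ε) ^ p :=
    (ContinuousAt.eventually_lt (by fun_prop (disch := simp [hp0]))
      (by fun_prop (disch := simp [hp0])) (by simpa)).filter_mono nhdsWithin_le_nhds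
  have block_limit : ∀ᶠ ε : ℝ in 𝓝[>] 0, N - (N - 1) * (1 - ε) ^ p < (Q * (1 - ε)) ^ p :=
    (ContinuousAt.eventually_lt (by fun_prop (disch := simp [hp0]))
      (by fun_prop (disch := simp [hp0]))
      (by simpa using Real.one_lt_rpow hQ (by linarith))).filter_mono nhdsWithin_le_nhds
  obtain ⟨ε, hchild, hblock, hε, hε1⟩ :=
    (child.and (block_limit.and (Ioo_mem_nhdsGT one_pos))).exists
  have gap_pos : 0 < bernoulliGap p (1 + ε / N) := by
    have : 0 < ε / N := by positivity
    exact bernoulliGap_pos hp (by positivity) (by linarith)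
  have sum_small : ∀ᶠ η : ℝ in 𝓝[>] 0, N * ((1 + η) / (1 - η)) < N + bernoulliGap p (1 + ε / N) :=
    (ContinuousAt.eventually_lt (by fun_prop (disch := simp)) continuousAt_const
      (by simpa)).filter_mono nhdsWithin_le_nhds
  have block_small : ∀ᶠ η : ℝ in 𝓝[>] 0,
      N / (1 - η) - (N - 1) * ((1 - ε) ^ p / (1 + η)) < (Q * (1 - ε)) ^ p :=
    (ContinuousAt.eventually_lt (by fun_prop (disch := simp)) continuousAt_const
      (by simpa)).filter_mono nhdsWithin_le_nhds
  obtain ⟨η, hsum, hblock_η, hη, hηη₁⟩ :=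
    (sum_small.and (block_small.and (Ioo_mem_nhdsGT hη₁))).exists
  exact ⟨ε, η, hηη₁, hε, hε1, hη, hηη₁.trans_le hη₁1, hsum, hblock_η, hchild⟩

end Admissible

/-- Lemma 3.3: choice of `η` forcing flatness of `(s_I)` on levels and near-equality
for `(r_I)` between consecutive levels. -/
theorem eta_lemma (p : ℝ) (hp : 1 < p) (d : ℕ) (l : ℕ → ℕ)
    (hl : ∀ i ∈ Finset.Icc 1 d, 0 < l i)
    (μ : ℝ) (hμ : 0 < μ) (hμ1 : μ < 1)
    (lam Θ M : ℝ) (hlam : 0 < lam) (hΘ : 0 < Θ) (hM : lam / Θ < M) :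
    ∀ η₁ : ℝ, 0 < η₁ → η₁ < 1 →
      ∃ η : ℝ, 0 < η ∧ η < η₁ ∧
        ∀ l' : ℕ → ℕ, (∀ i ∈ Finset.Icc 1 d, l' i = l i) → 0 < l' (d + 1) →
        ∀ r s : ℕ → ℕ → ℝ,
          (∀ j ≤ d + 1, ∀ k < levN l' j, 0 ≤ r j k ∧ 0 ≤ s j k) →
          (∀ j ≤ d + 1, ∀ k < levN l' j, r j k ≤ lam * s j k) →
          (∀ j ≤ d, ∀ k < levN l' j,
            r j k ≤ childSum l' r j k ∧ s j k ≤ childSum l' s j k) →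
          (∀ k < levN l' d,
            r d k ^ p ≤ (1 + η) * Θ ^ p * (l' (d + 1) : ℝ) ^ (p - 1) * childSumPow l' s p d k) →
          (r 0 0 ^ p > (1 - η) * Θ ^ p * (∏ i ∈ Finset.Icc 1 (d + 1), (l' i : ℝ) ^ (p - 1)) *
            ∑ k ∈ Finset.range (levN l' (d + 1)), s (d + 1) k ^ p) →
          (∀ j ≤ d, ∀ k < levN l' j, ∀ k' < levN l' j, s j k ≤ M * s j k') ∧
          (∀ i < d, ∀ k < levN l' i,
            r i k ^ p > (1 - μ) * (l' (i + 1) : ℝ) ^ (p - 1) * childSumPow l' r p i k) := by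
  intro η₁ hη₁ hη₁1
  have hM0 : 0 < M := (div_pos hlam hΘ).trans hM
  have hN : 0 < levN l d := prod_pos hl
  obtain ⟨ε, η, hηη₁, h⟩ := Admissible.exists_of_lt hp hN hμ
    ((one_lt_div (div_pos hlam hΘ)).2 hM) hη₁ hη₁1.le
  refine ⟨η, h.eta_pos, hηη₁, fun l' hl' _ r s hnonneg hrs hsub hblock hroot ↦ ?_⟩
  rw [← show levN l' d = levN l d from prod_congr rfl hl'] at hN h
  have hr j (hj : j ≤ d) k (hk : k < levN l' j) : 0 ≤ r j k := (hnonneg j (by omega) k hk).1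
  have hs j (hj : j ≤ d + 1) k (hk : k < levN l' j) : 0 ≤ s j k := (hnonneg j hj k hk).2
  have hR : 0 < r 0 0 := pos_of_mul_sum_rpow_lt_rpow (by linarith)
    (mul_nonneg (mul_nonneg (sub_nonneg.2 h.eta_lt_one.le) (by positivity)) (by positivity))
    (fun k hk ↦ hs _ le_rfl k (mem_range.1 hk)) (hr 0 (by omega) 0 (by simp [levN])) hroot
  have hrE : ∀ k < levN l' d, r d k ^ p ≤ (1 + η) * (Θ ^ p * scaledChildSumPow l' s p d k) := by
    simpa only [scaledChildSumPow, mul_assoc] using hblock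
  have hE := mul_sum_scaledChildSumPow_le hN hR.le hroot.le
  rw [mul_assoc, mul_sum] at hE
  have hflat : NearlyFlat l' r d ε := .of_sum_rpow_lt hp.le (fun j hj k hk ↦ (hsub j hj.le k hk).1)
    hN hR (hr d le_rfl) h.eps_pos.le (h.sum_rpow_lt (by positivity) hrE hE)
  have hsd := h.le_of_nearlyFlat hp.le (by positivity) hΘ hflat hR.le hs
    (fun k hk ↦ (hsub d le_rfl k hk).2) hrE hE
  refine ⟨?_, fun i hi k hk ↦ (mul_assoc _ _ _).trans_lt ?_⟩
  · simpa only [show M / (lam / Θ) / Θ * lam = M by field_simp] using hflat.le_mul_of_le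
      (fun j hj k hk ↦ (hsub j hj.le k hk).2) hN (by positivity) (fun j hj ↦ hrs j (by omega)) hsd
  · exact hflat.mul_scaledChildSumPow_lt (by linarith) hN hR hr h.eps_pos.le h.eps_lt_one.le
      (by linarith) h.child_lt hi hk
end
end

section
/- Let (X,d_X),(Y,d_Y) be metric spaces, F : X → Y a map, L ∈ ℕ, f : 2^L → X, 1 < p < ∞, and let I_1,…,I_m be pairwise disjoint nonempty subsets of [L] = {1,…,L} with union I. Suppose b > 0 is such that every g : 2^m → X satisfies 𝔼_δ ϱ_Y^g(δ,−δ)^p ≤ b^p·m^{p−1}·∑_{j=1}^m 𝔼_δ ϱ_X^g(δ, d_jδ)^p. Then 𝔼_ε ϱ_Y^f(ε, Iε)^p ≤ b^p·m^{p−1}·∑_{j=1}^m 𝔼_ε ϱ_X^f(ε, I_jε)^p. -/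
open Finset

noncomputable section

/-- Normalized Hamming distance on the cube `{±1}^n` (modeled as `Fin n → Bool`). -/
def hdist (n : ℕ) (ε δ : Fin n → Bool) : ℝ :=
  ((Finset.univ.filter fun i => ε i ≠ δ i).card : ℝ) / n

/-- `-ε`: flip all coordinates. -/
def negCube {n : ℕ} (ε : Fin n → Bool) : Fin n → Bool := fun i => !(ε i)

/-- `d_i ε`: flip the `i`-th coordinate. -/
def flipCoord {n : ℕ} (i : Fin n) (ε : Fin n → Bool) : Fin n → Bool :=
  Function.update ε i (!(ε i))

/-- Expectation with respect to the uniform probability measure on the cube. -/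
def cubeE (n : ℕ) (Φ : (Fin n → Bool) → ℝ) : ℝ :=
  (∑ ε : Fin n → Bool, Φ ε) / 2 ^ n

/-- Lipschitz constant of a map from the cube (with metric `hdist`) into a metric space,
with the convention `0 / 0 = 0`. -/
def cubeLip {n : ℕ} {X : Type} [MetricSpace X] (f : (Fin n → Bool) → X) : ℝ :=
  sSup { r : ℝ | ∃ ε δ, r = dist (f ε) (f δ) / hdist n ε δ }

/-- A map between (bundled) metric spaces. -/
structure MetricMap where
  X : Type
  Y : Type
  mX : MetricSpace X
  mY : MetricSpace Y
  F : X → Y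

attribute [instance] MetricMap.mX MetricMap.mY

/-- `Sε`: flip the coordinates of `ε` lying in the set `S`. -/
def flipSet {n : ℕ} (S : Finset (Fin n)) (ε : Fin n → Bool) : Fin n → Bool :=
  fun i => if i ∈ S then !(ε i) else ε i

/-!
Averaging over block flips: fix `ε` and apply the hypothesis to `g_ε δ = f (blockFlip S δ ε)`.
Composing flips adds the flipped sets mod 2, and since the blocks are disjoint `T ↦ ⋃ j ∈ T, S j`
respects this addition. Hence flipping `δ` on `T` flips `blockFlip S δ ε` on `⋃ j ∈ T, S j`: with
`T = univ` and `T = {j}`, the quantities for `g_ε` become those for `f` at the point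
`blockFlip S δ ε`. For fixed `δ` this point is uniformly distributed when `ε` is, so averaging over
`ε` removes `δ`.
-/

open scoped symmDiff Function

lemma biUnion_symmDiff {ι α : Type*} [DecidableEq ι] [DecidableEq α] {S : ι → Finset α}
    {s t : Finset ι} (hS : (s ∪ t : Set ι).PairwiseDisjoint S) :
    (s ∆ t).biUnion S = s.biUnion S ∆ t.biUnion S := by
  have hS' : (s ∪ t : Set ι).PairwiseDisjoint fun i => (S i : Set α) :=
    pairwiseDisjoint_coe.2 hS
  apply coe_injective
  push_cast
  rw [Set.symmDiff_def, Set.symmDiff_def, Set.biUnion_union, Set.biUnion_sdiff_biUnion_eq hS',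
    Set.biUnion_sdiff_biUnion_eq (Set.union_comm _ _ ▸ hS')]

section Flips

variable {n : ℕ}

lemma negCube_eq_flipSet_univ (ε : Fin n → Bool) : negCube ε = flipSet univ ε := by
  ext i
  simp [negCube, flipSet]

lemma flipCoord_eq_flipSet_singleton (i : Fin n) (ε : Fin n → Bool) :
    flipCoord i ε = flipSet {i} ε := by
  ext k
  by_cases h : k = i <;> simp [flipCoord, flipSet, h]

lemma flipSet_empty (ε : Fin n → Bool) : flipSet ∅ ε = ε := by
  ext i
  simp [flipSet]

lemma flipSet_flipSet (A B : Finset (Fin n)) (ε : Fin n → Bool) :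
    flipSet A (flipSet B ε) = flipSet (A ∆ B) ε := by
  ext i
  by_cases hA : i ∈ A <;> by_cases hB : i ∈ B <;> simp [flipSet, mem_symmDiff, hA, hB]

lemma flipSet_involutive (A : Finset (Fin n)) : Function.Involutive (flipSet A) := fun ε => by
  rw [flipSet_flipSet, symmDiff_self, bot_eq_empty, flipSet_empty]

/-- The set of coordinates at which `ε` equals `true`; it identifies the cube with the subsets of
`Fin n`. -/
def trueSet (ε : Fin n → Bool) : Finset (Fin n) := {i | ε i}

lemma trueSet_flipSet (A : Finset (Fin n)) (ε : Fin n → Bool) :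
    trueSet (flipSet A ε) = A ∆ trueSet ε := by
  ext i
  by_cases h : i ∈ A <;> simp [trueSet, flipSet, mem_symmDiff, h]

end Flips

section BlockFlip

variable {L m : ℕ} {S : Fin m → Finset (Fin L)}

/-- For pairwise disjoint blocks `S j`, the point obtained from `ε` by multiplying its coordinates
in each `S j` by the sign `δ j`, where `true` stands for `-1`. Varying `δ` maps the `m`-cube to the
`L`-cube; a coordinate lying in several blocks is flipped at most once. -/
def blockFlip (S : Fin m → Finset (Fin L)) (δ : Fin m → Bool) (ε : Fin L → Bool) : Fin L → Bool :=
  flipSet ((trueSet δ).biUnion S) ε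

lemma blockFlip_flipSet (hS : Pairwise (Disjoint on S)) (T : Finset (Fin m)) (δ : Fin m → Bool)
    (ε : Fin L → Bool) :
    blockFlip S (flipSet T δ) ε = flipSet (T.biUnion S) (blockFlip S δ ε) := by
  rw [blockFlip, trueSet_flipSet, biUnion_symmDiff (hS.set_pairwise _), ← flipSet_flipSet,
    blockFlip]

lemma blockFlip_negCube (hS : Pairwise (Disjoint on S)) (δ : Fin m → Bool) (ε : Fin L → Bool) :
    blockFlip S (negCube δ) ε = flipSet (univ.biUnion S) (blockFlip S δ ε) := by
  rw [negCube_eq_flipSet_univ, blockFlip_flipSet hS]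

lemma blockFlip_flipCoord (hS : Pairwise (Disjoint on S)) (j : Fin m) (δ : Fin m → Bool)
    (ε : Fin L → Bool) :
    blockFlip S (flipCoord j δ) ε = flipSet (S j) (blockFlip S δ ε) := by
  rw [flipCoord_eq_flipSet_singleton, blockFlip_flipSet hS, singleton_biUnion]

lemma blockFlip_bijective (S : Fin m → Finset (Fin L)) (δ : Fin m → Bool) :
    Function.Bijective (blockFlip S δ) :=
  (flipSet_involutive _).bijective

end BlockFlip

section Expectation

variable {n m : ℕ}

lemma cubeE_mono {Φ Ψ : (Fin n → Bool) → ℝ} (h : ∀ ε, Φ ε ≤ Ψ ε) : cubeE n Φ ≤ cubeE n Ψ := by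
  unfold cubeE
  gcongr with ε
  exact h ε

lemma cubeE_const (c : ℝ) : cubeE n (fun _ => c) = c := by
  simp [cubeE]

lemma cubeE_const_mul (c : ℝ) (Φ : (Fin n → Bool) → ℝ) :
    cubeE n (fun ε => c * Φ ε) = c * cubeE n Φ := by
  simp only [cubeE, ← mul_sum, mul_div_assoc]

lemma cubeE_sum {ι : Type*} (s : Finset ι) (Φ : ι → (Fin n → Bool) → ℝ) :
    cubeE n (fun ε => ∑ j ∈ s, Φ j ε) = ∑ j ∈ s, cubeE n (Φ j) := by
  simp only [cubeE, sum_comm (t := s), sum_div]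

lemma cubeE_comm (Φ : (Fin n → Bool) → (Fin m → Bool) → ℝ) :
    cubeE n (fun ε => cubeE m (fun δ => Φ ε δ)) = cubeE m (fun δ => cubeE n (fun ε => Φ ε δ)) := by
  simp only [cubeE, ← sum_div]
  rw [sum_comm, div_right_comm]

lemma cubeE_comp_of_bijective {σ : (Fin n → Bool) → (Fin n → Bool)} (hσ : Function.Bijective σ)
    (Φ : (Fin n → Bool) → ℝ) : cubeE n (fun ε => Φ (σ ε)) = cubeE n Φ := by
  rw [cubeE, hσ.sum_comp, cubeE]

lemma cubeE_cubeE_blockFlip (S : Fin m → Finset (Fin n)) (Φ : (Fin n → Bool) → ℝ) :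
    cubeE n (fun ε => cubeE m (fun δ => Φ (blockFlip S δ ε))) = cubeE n Φ := by
  rw [cubeE_comm]
  simp only [cubeE_comp_of_bijective (blockFlip_bijective S _), cubeE_const]

end Expectation

theorem bConst_transfer_general {X : Type*} {L m : ℕ} (A B : X → X → ℝ) (C : ℝ)
    {S : Fin m → Finset (Fin L)} (hS : Pairwise (Disjoint on S))
    (hineq : ∀ g : (Fin m → Bool) → X,
      cubeE m (fun δ => A (g δ) (g (negCube δ)))
        ≤ C * ∑ j, cubeE m (fun δ => B (g δ) (g (flipCoord j δ))))
    (f : (Fin L → Bool) → X) :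
    cubeE L (fun ε => A (f ε) (f (flipSet (univ.biUnion S) ε)))
      ≤ C * ∑ j, cubeE L (fun ε => B (f ε) (f (flipSet (S j) ε))) := by
  let g (ε : Fin L → Bool) (δ : Fin m → Bool) : X := f (blockFlip S δ ε)
  have average_negCube :
      cubeE L (fun ε => cubeE m fun δ => A (g ε δ) (g ε (negCube δ))) =
        cubeE L fun ε => A (f ε) (f (flipSet (univ.biUnion S) ε)) := by
    simp only [g, blockFlip_negCube hS]
    exact cubeE_cubeE_blockFlip S fun ε => A (f ε) (f (flipSet (univ.biUnion S) ε))
  have average_flipCoord (j : Fin m) :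
      cubeE L (fun ε => cubeE m fun δ => B (g ε δ) (g ε (flipCoord j δ))) =
        cubeE L fun ε => B (f ε) (f (flipSet (S j) ε)) := by
    simp only [g, blockFlip_flipCoord hS]
    exact cubeE_cubeE_blockFlip S fun ε => B (f ε) (f (flipSet (S j) ε))
  calc cubeE L (fun ε => A (f ε) (f (flipSet (univ.biUnion S) ε)))
      = cubeE L (fun ε => cubeE m fun δ => A (g ε δ) (g ε (negCube δ))) := average_negCube.symm
    _ ≤ cubeE L (fun ε => C * ∑ j, cubeE m fun δ => B (g ε δ) (g ε (flipCoord j δ))) :=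
      cubeE_mono fun ε => hineq (g ε)
    _ = C * ∑ j, cubeE L (fun ε => B (f ε) (f (flipSet (S j) ε))) := by
      simp only [cubeE_const_mul, cubeE_sum, average_flipCoord]

/-- The "self-improvement" substitution: if the `b_{p,m}`-type inequality holds for all maps
`g : 2^m → X` (with respect to `F`), then it transfers to flips along pairwise disjoint
nonempty sets `I_1, …, I_m ⊂ [L]` with union `I`. -/
theorem bConst_transfer (X Y : Type) [MetricSpace X] [MetricSpace Y] (F : X → Y)
    (L : ℕ) (f : (Fin L → Bool) → X) (p : ℝ) (hp : 1 < p)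
    (m : ℕ) (hm : 0 < m) (S : Fin m → Finset (Fin L))
    (hdisj : ∀ i j : Fin m, i ≠ j → Disjoint (S i) (S j))
    (hne : ∀ j : Fin m, (S j).Nonempty)
    (b : ℝ) (hb : 0 < b)
    (hineq : ∀ g : (Fin m → Bool) → X,
      cubeE m (fun δ => dist (F (g δ)) (F (g (negCube δ))) ^ p)
        ≤ b ^ p * (m : ℝ) ^ (p - 1) *
          ∑ j : Fin m, cubeE m (fun δ => dist (g δ) (g (flipCoord j δ)) ^ p)) :
    cubeE L (fun ε => dist (F (f ε)) (F (f (flipSet (Finset.univ.biUnion S) ε))) ^ p)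
      ≤ b ^ p * (m : ℝ) ^ (p - 1) *
        ∑ j : Fin m, cubeE L (fun ε => dist (f ε) (f (flipSet (S j) ε)) ^ p) :=
  bConst_transfer_general (fun x y => dist (F x) (F y) ^ p) (fun x y => dist x y ^ p)
    (b ^ p * (m : ℝ) ^ (p - 1)) (fun i j => hdisj i j) hineq f
end
end

section
/- Let 𝓕 be a family of maps between metric spaces with λ = sup_{F∈𝓕} Lip(F) ∈ (0,∞). Suppose Θ > 0 is such that for every 0 < ϑ < Θ, every D > 1, and every l ∈ ℕ, there exist F : X → Y in 𝓕 and h : 2^l → X such that F∘h is injective with dist(F∘h) ≤ D and d_Y(F(h(ε₁)), F(h(ε₂))) ≥ ϑ·d_X(h(ε₁), h(ε₂)) for all ε₁, ε₂ ∈ 2^l. Then c(𝓕) ≥ Θ. -/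
open Finset

noncomputable section

/-- Lipschitz constant of the "inverse" of a map from the cube: `sup ∂(ε,δ)/d(f(ε),f(δ))`,
with the convention `0 / 0 = 0`.  For an injective `f` this is `Lip(f⁻¹)`. -/
def cubeCoLip {n : ℕ} {X : Type} [MetricSpace X] (f : (Fin n → Bool) → X) : ℝ :=
  sSup { r : ℝ | ∃ ε δ, r = hdist n ε δ / dist (f ε) (f δ) }

/-- The distortion `dist(f) = Lip(f)·Lip(f⁻¹)` of an (injective) map from the cube. -/
def cubeDistortion {n : ℕ} {X : Type} [MetricSpace X] (f : (Fin n → Bool) → X) : ℝ :=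
  cubeLip f * cubeCoLip f

/-- `c(𝓕)`: the supremum of those `c > 0` witnessing the factorization of the Hamming cubes
(`sSup ∅ = 0` in `ℝ`, matching the convention `c(𝓕) = 0` if no such `c` exists). -/
def cConst (𝓕 : Set MetricMap) : ℝ :=
  sSup { c : ℝ | 0 < c ∧ ∀ D : ℝ, 1 < D → ∀ n : ℕ, 0 < n →
    ∃ G ∈ 𝓕, ∃ f : (Fin n → Bool) → G.X, ∃ a b : ℝ, 0 < a ∧ 0 < b ∧ a * c ≤ b ∧
      ∀ ε δ : Fin n → Bool,
        a / D * hdist n ε δ ≤ dist (f ε) (f δ) ∧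
        dist (f ε) (f δ) ≤ a * D * hdist n ε δ ∧
        b / D * hdist n ε δ ≤ dist (G.F (f ε)) (G.F (f δ)) ∧
        dist (G.F (f ε)) (G.F (f δ)) ≤ b * D * hdist n ε δ }

/-!
The argument is the metric type argument of Bourgain, Milman and Wolfson. If `F ∘ h` is almost an
isometry up to scaling on `2^l`, and `F` is Lipschitz and co-Lipschitz on the image of `h`, then `h`
has distortion bounded independently of `l`. It is enough to find in `2^l`, for `l = n ^ k` large, a
rescaled copy of `2^n` on which `h` itself is almost an isometry up to scaling, because `F ∘ h`
remains one there.

For `g : 2^n → X`, the triangle inequality along paths from `x` to `-x` and Cauchy–Schwarz give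
`∑ d(g x, g (-x))² ≤ n ∑ᵢ ∑ d(g x, g (dᵢ x))²`. Near-equality forces all edges to have almost the
same length and all antipodal pairs to be almost `n` edges apart, and then `g` is almost an isometry
up to scaling. So if `h` were far from this on every rescaled copy of `2^n`, the inequality would
improve by a fixed factor `θ < 1` on each of them. Averaging over translates and iterating over
blocks of `1, n, n², …` coordinates, the mean square distance of antipodal pairs would be at most
`θ ^ k l²` times the largest squared edge length, against the lower Lipschitz bound for large `k`.
-/

variable {ι κ X Y : Type*}

/-! ### Flips -/

/-- Flip the coordinates in `S`. On `Fin n → Bool`, `flipOn {i}` is `flipCoord i` and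
`flipOn univ` is `negCube`; allowing every finite set of coordinates covers edges, antipodes and
the blocks in between by one notion. -/
def flipOn [DecidableEq ι] (S : Finset ι) (x : ι → Bool) : ι → Bool :=
  fun i => if i ∈ S then !x i else x i

lemma flipOn_flipOn_self [DecidableEq ι] (S : Finset ι) (x : ι → Bool) :
    flipOn S (flipOn S x) = x := by
  funext i
  by_cases hi : i ∈ S <;> simp [flipOn, hi]

lemma flipOn_comm [DecidableEq ι] (S T : Finset ι) (x : ι → Bool) :
    flipOn S (flipOn T x) = flipOn T (flipOn S x) := by
  funext i
  by_cases hS : i ∈ S <;> by_cases hT : i ∈ T <;> simp [flipOn, hS, hT]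

lemma sum_comp_flipOn [Fintype ι] [DecidableEq ι] (S : Finset ι) (Φ : (ι → Bool) → ℝ) :
    ∑ x, Φ (flipOn S x) = ∑ x, Φ x :=
  Equiv.sum_comp (Function.Involutive.toPerm (flipOn S) (flipOn_flipOn_self S)) Φ

lemma hammingDist_flipOn_right [Fintype ι] [DecidableEq ι] (S : Finset ι) (x : ι → Bool) :
    hammingDist x (flipOn S x) = #S := by
  simp [hammingDist, flipOn]

lemma hammingDist_flipOn_univ_add [Fintype ι] [DecidableEq ι] (x y : ι → Bool) :
    hammingDist y (flipOn univ x) + hammingDist x y = Fintype.card ι := by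
  have h : hammingDist y (flipOn univ x) = #{i | ¬ x i ≠ y i} := by
    simp [hammingDist, flipOn, eq_comm]
  rw [h, add_comm, ← card_univ]
  exact card_filter_add_card_filter_not _

lemma hammingDist_flipOn_singleton_add_one [Fintype ι] [DecidableEq ι] {x y : ι → Bool} {i : ι}
    (hi : x i ≠ y i) : hammingDist (flipOn {i} x) y + 1 = hammingDist x y := by
  have h : ({j | flipOn {i} x j ≠ y j} : Finset ι) = ({j | x j ≠ y j} : Finset ι).erase i := by
    ext j
    by_cases hj : j = i
    · subst hj; simpa [flipOn, Bool.eq_not_iff] using hi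
    · simp [flipOn, hj]
  rw [hammingDist, h, card_erase_add_one (by simpa using hi), hammingDist]

lemma dist_le_mul_hammingDist [Fintype ι] [DecidableEq ι] [PseudoMetricSpace X]
    {g : (ι → Bool) → X} {c : ℝ} (hc : ∀ x i, dist (g x) (g (flipOn {i} x)) ≤ c)
    (x y : ι → Bool) : dist (g x) (g y) ≤ c * hammingDist x y := by
  induction hk : hammingDist x y generalizing x with
  | zero => simp [hammingDist_eq_zero.1 hk]
  | succ k ih =>
    obtain ⟨i, hi⟩ : ∃ i, x i ≠ y i :=
      Function.ne_iff.1 (hammingDist_ne_zero.1 (hk ▸ k.succ_ne_zero))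
    have hstep : hammingDist (flipOn {i} x) y = k := by
      have := hammingDist_flipOn_singleton_add_one hi
      omega
    calc dist (g x) (g y) ≤ dist (g x) (g (flipOn {i} x)) + dist (g (flipOn {i} x)) (g y) :=
          dist_triangle _ _ _
      _ ≤ c + c * k := add_le_add (hc x i) (ih _ hstep)
      _ = c * (k + 1 : ℕ) := by push_cast; ring

/-! ### Bi-Lipschitz maps on the cube -/

/-- Two-sided Lipschitz bounds `a ∂ ≤ d_X ≤ b ∂` for a map on the cube, where `∂` is the
unnormalized Hamming distance: this makes the constants insensitive to passing to subcubes. -/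
structure HammingBiLipschitz [Fintype ι] [PseudoMetricSpace X] (a b : ℝ) (g : (ι → Bool) → X) :
    Prop where
  lower : ∀ x y, a * hammingDist x y ≤ dist (g x) (g y)
  upper : ∀ x y, dist (g x) (g y) ≤ b * hammingDist x y

/-- Maps between cubes that multiply all Hamming distances by `s`. -/
def IsHammingDilation [Fintype ι] [Fintype κ] (s : ℕ) (f : (κ → Bool) → (ι → Bool)) : Prop :=
  ∀ x y, hammingDist (f x) (f y) = s * hammingDist x y

namespace HammingBiLipschitz

variable [Fintype ι] [PseudoMetricSpace X] {a b : ℝ} {g : (ι → Bool) → X}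

lemma lower_le_upper [Nonempty ι] (hg : HammingBiLipschitz a b g) : a ≤ b := by
  classical
  have h := (hg.lower _ _).trans (hg.upper (fun _ => false) (flipOn univ fun _ => false))
  rw [hammingDist_flipOn_right, card_univ] at h
  exact le_of_mul_le_mul_right h (by exact_mod_cast Fintype.card_pos)

lemma mono {a' b' : ℝ} (hg : HammingBiLipschitz a b g) (ha : a' ≤ a) (hb : b ≤ b') :
    HammingBiLipschitz a' b' g where
  lower x y := (mul_le_mul_of_nonneg_right ha (Nat.cast_nonneg _)).trans (hg.lower x y)
  upper x y := (hg.upper x y).trans (mul_le_mul_of_nonneg_right hb (Nat.cast_nonneg _))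

lemma comp_dilation [Fintype κ] (hg : HammingBiLipschitz a b g) {s : ℕ}
    {f : (κ → Bool) → (ι → Bool)} (hf : IsHammingDilation s f) :
    HammingBiLipschitz (a * s) (b * s) (g ∘ f) where
  lower x y := by simpa [hf x y, mul_assoc] using hg.lower (f x) (f y)
  upper x y := by simpa [hf x y, mul_assoc] using hg.upper (f x) (f y)

lemma of_comp [PseudoMetricSpace Y] {F : X → Y} (hFg : HammingBiLipschitz a b (F ∘ g))
    {K ϑ : ℝ} (hK : 0 < K) (hF : ∀ x y, dist (F (g x)) (F (g y)) ≤ K * dist (g x) (g y))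
    (hϑ : 0 < ϑ) (hF' : ∀ x y, ϑ * dist (g x) (g y) ≤ dist (F (g x)) (F (g y))) :
    HammingBiLipschitz (a / K) (b / ϑ) g where
  lower x y := by
    rw [div_mul_eq_mul_div, div_le_iff₀' hK]
    exact (hFg.lower x y).trans (hF x y)
  upper x y := by
    rw [div_mul_eq_mul_div, le_div_iff₀' hϑ]
    exact (hF' x y).trans (hFg.upper x y)

/-- The lower bound comes from the detour `x → y → -x`, as `∂(y, -x) = n - ∂(x, y)`. -/
lemma of_edges_of_antipodes [DecidableEq ι] {s ρ : ℝ} (hρ : 0 ≤ ρ)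
    (hedge : ∀ x i, dist (g x) (g (flipOn {i} x)) ≤ s + ρ)
    (hanti : ∀ x, Fintype.card ι * (s - ρ) ≤ dist (g x) (g (flipOn univ x))) :
    HammingBiLipschitz (s - 2 * Fintype.card ι * ρ) (s + ρ) g where
  upper := dist_le_mul_hammingDist hedge
  lower x y := by
    obtain h0 | h1 : hammingDist x y = 0 ∨ 1 ≤ hammingDist x y := by omega
    · simp [h0]
    have h1 : (1 : ℝ) ≤ hammingDist x y := by exact_mod_cast h1
    have htri := dist_triangle (g x) (g y) (g (flipOn univ x))
    have hup := dist_le_mul_hammingDist hedge y (flipOn univ x)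
    have hcard : (hammingDist y (flipOn univ x) : ℝ) = Fintype.card ι - hammingDist x y := by
      rw [eq_sub_iff_add_eq]; exact_mod_cast hammingDist_flipOn_univ_add x y
    rw [hcard] at hup
    have hmul : Fintype.card ι * ρ ≤ Fintype.card ι * ρ * hammingDist x y :=
      le_mul_of_one_le_right (by positivity) h1
    have hnonneg : 0 ≤ ρ * (hammingDist x y : ℝ) := by positivity
    linarith [hanti x]

end HammingBiLipschitz

/-! ### Energies -/

section Energy

variable [Fintype ι] [DecidableEq ι] [PseudoMetricSpace X] {g : (ι → Bool) → X}

/-- The total squared displacement of `g` under flipping `S`. Metric type compares its values at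
`S = univ` (antipodes) and at singletons (edges). -/
def flipEnergy (g : (ι → Bool) → X) (S : Finset ι) : ℝ :=
  ∑ x, dist (g x) (g (flipOn S x)) ^ 2

/-- The edge side of the metric type inequality `flipEnergy g univ ≤ n * edgeEnergy g` on `2^n`. -/
def edgeEnergy (g : (ι → Bool) → X) : ℝ := ∑ i, flipEnergy g {i}

lemma edgeEnergy_nonneg (g : (ι → Bool) → X) : 0 ≤ edgeEnergy g :=
  sum_nonneg fun _ _ => sum_nonneg fun _ _ => sq_nonneg _

lemma flipEnergy_le {S : Finset ι} {c : ℝ} (hc : ∀ x, dist (g x) (g (flipOn S x)) ≤ c) :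
    flipEnergy g S ≤ 2 ^ Fintype.card ι * c ^ 2 :=
  (sum_le_card_nsmul univ _ _ fun x _ => pow_le_pow_left₀ dist_nonneg (hc x) 2).trans_eq
    (by simp)

lemma le_flipEnergy {S : Finset ι} {c : ℝ} (hc₀ : 0 ≤ c)
    (hc : ∀ x, c ≤ dist (g x) (g (flipOn S x))) :
    2 ^ Fintype.card ι * c ^ 2 ≤ flipEnergy g S :=
  Eq.trans_le (by simp)
    (card_nsmul_le_sum univ _ _ fun x _ => pow_le_pow_left₀ hc₀ (hc x) 2)

lemma edgeEnergy_le {c : ℝ} (hc : ∀ x i, dist (g x) (g (flipOn {i} x)) ≤ c) :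
    edgeEnergy g ≤ Fintype.card ι * 2 ^ Fintype.card ι * c ^ 2 :=
  (sum_le_card_nsmul univ _ _ fun i _ => flipEnergy_le fun x => hc x i).trans_eq
    (by simp [mul_assoc])

end Energy

/-! ### The equality case of the metric type inequality -/

lemma sum_sq_sub_div_card_le [Fintype ι] {p : ι → ℝ} {A : ℝ} (hA : 0 ≤ A) (hle : A ≤ ∑ i, p i) :
    ∑ i, (p i - A / Fintype.card ι) ^ 2 ≤ ∑ i, p i ^ 2 - A ^ 2 / Fintype.card ι := by
  set N := (Fintype.card ι : ℝ) with hN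
  have hexpand : ∑ i, (p i - A / N) ^ 2
      = ∑ i, p i ^ 2 - 2 * (A / N) * ∑ i, p i + N * (A / N) ^ 2 := by
    simp only [sub_sq, sum_add_distrib, sum_sub_distrib, sum_const, card_univ, nsmul_eq_mul,
      mul_sum, ← hN]
    congr 2
    exact sum_congr rfl fun _ _ => by ring
  have hcross : 2 * (A / N) * A ≤ 2 * (A / N) * ∑ i, p i := by gcongr
  have hsq : N * (A / N) ^ 2 = A * (A / N) := by
    rcases eq_or_ne N 0 with h0 | h0
    · simp [h0]
    · field_simp
  rw [hexpand, hsq, sq A, mul_div_assoc]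
  linarith

section CubePath

variable {n : ℕ}

/-- Flip the first `k` coordinates: the `k`-th vertex of the path from `x` to its antipode. -/
def flipInit (k : ℕ) (x : Fin n → Bool) : Fin n → Bool := flipOn {j | (j : ℕ) < k} x

lemma flipInit_zero (x : Fin n → Bool) : flipInit 0 x = x := by
  funext j
  simp [flipInit, flipOn]

lemma flipInit_self (x : Fin n → Bool) : flipInit n x = flipOn univ x := by
  simp [flipInit]

lemma flipInit_succ (k : Fin n) (x : Fin n → Bool) :
    flipInit (k + 1) x = flipOn {k} (flipInit k x) := by
  funext j
  by_cases h : j = k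
  · simp [flipInit, flipOn, h]
  · have hlt : (j : ℕ) < k + 1 ↔ (j : ℕ) < k :=
      Nat.lt_succ_iff_lt_or_eq.trans (or_iff_left (Fin.val_ne_of_ne h))
    simp only [flipInit, flipOn, mem_filter_univ, mem_singleton, hlt, h, if_false]

variable [PseudoMetricSpace X]

/-- The length of the `k`-th edge of the path from `x` to its antipode. -/
def pathStep (g : (Fin n → Bool) → X) (x : Fin n → Bool) (k : Fin n) : ℝ :=
  dist (g (flipInit k x)) (g (flipOn {k} (flipInit k x)))

lemma pathStep_flipInit (g : (Fin n → Bool) → X) (x : Fin n → Bool) (k : Fin n) :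
    pathStep g (flipInit k x) k = dist (g x) (g (flipOn {k} x)) := by
  simp only [pathStep, flipInit, flipOn_flipOn_self]

lemma pathStep_flipOn_singleton (g : (Fin n → Bool) → X) (x : Fin n → Bool) (k : Fin n) :
    pathStep g (flipOn {k} x) k = pathStep g x k := by
  rw [pathStep, flipInit, flipOn_comm, flipOn_flipOn_self, dist_comm, ← flipInit, pathStep]

lemma dist_flipOn_univ_le_sum_pathStep (g : (Fin n → Bool) → X) (x : Fin n → Bool) :
    dist (g x) (g (flipOn univ x)) ≤ ∑ k, pathStep g x k := by
  have h := dist_le_range_sum_dist (fun k => g (flipInit k x)) n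
  rw [← Fin.sum_univ_eq_sum_range
    fun k => dist (g (flipInit k x)) (g (flipInit (k + 1) x))] at h
  simpa only [flipInit_zero, flipInit_self, flipInit_succ, pathStep] using h

lemma sum_sum_pathStep_sq (g : (Fin n → Bool) → X) :
    ∑ x, ∑ k, pathStep g x k ^ 2 = edgeEnergy g := by
  rw [sum_comm]
  exact sum_congr rfl fun k _ =>
    sum_comp_flipOn _ fun x => dist (g x) (g (flipOn {k} x)) ^ 2

/-- Triangle inequality along the paths and Cauchy–Schwarz, keeping track of the defect. -/
lemma sum_sum_pathStep_sub_sq_le (g : (Fin n → Bool) → X) :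
    ∑ x, ∑ k, (pathStep g x k - dist (g x) (g (flipOn univ x)) / n) ^ 2
      ≤ edgeEnergy g - flipEnergy g univ / n := by
  rw [← sum_sum_pathStep_sq, flipEnergy, sum_div, ← sum_sub_distrib]
  refine sum_le_sum fun x _ => ?_
  simpa using sum_sq_sub_div_card_le dist_nonneg (dist_flipOn_univ_le_sum_pathStep g x)

lemma flipEnergy_univ_le (hn : 0 < n) (g : (Fin n → Bool) → X) :
    flipEnergy g univ ≤ n * edgeEnergy g := by
  have h := (sum_nonneg fun _ _ => sum_nonneg fun _ _ => sq_nonneg _).trans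
    (sum_sum_pathStep_sub_sq_le g)
  rwa [sub_nonneg, div_le_iff₀' (by exact_mod_cast hn)] at h

lemma abs_pathStep_sub_le (hn : 0 < n) {g : (Fin n → Bool) → X} {η : ℝ}
    (hg : (1 - η) * n * edgeEnergy g ≤ flipEnergy g univ) (x : Fin n → Bool) (k : Fin n) :
    |pathStep g x k - dist (g x) (g (flipOn univ x)) / n| ≤ √(η * edgeEnergy g) := by
  have hn' : (0 : ℝ) < n := by exact_mod_cast hn
  refine Real.abs_le_sqrt ?_
  calc (pathStep g x k - dist (g x) (g (flipOn univ x)) / n) ^ 2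
      ≤ ∑ k, (pathStep g x k - dist (g x) (g (flipOn univ x)) / n) ^ 2 :=
        single_le_sum (f := fun k => (pathStep g x k - dist (g x) (g (flipOn univ x)) / n) ^ 2)
          (fun _ _ => sq_nonneg _) (mem_univ k)
    _ ≤ ∑ x, ∑ k, (pathStep g x k - dist (g x) (g (flipOn univ x)) / n) ^ 2 :=
        single_le_sum
          (f := fun x => ∑ k, (pathStep g x k - dist (g x) (g (flipOn univ x)) / n) ^ 2)
          (fun _ _ => sum_nonneg fun _ _ => sq_nonneg _) (mem_univ x)
    _ ≤ edgeEnergy g - flipEnergy g univ / n := sum_sum_pathStep_sub_sq_le g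
    _ ≤ η * edgeEnergy g := by
        rw [sub_le_comm, le_div_iff₀' hn']
        linarith

/-- The paths starting at `x` and at `flipOn {k} x` have the same `k`-th edge, so `A` hardly changes
between these two points. -/
lemma abs_sub_le_of_abs_pathStep_sub_le {g : (Fin n → Bool) → X} {A : (Fin n → Bool) → ℝ} {τ : ℝ}
    (hA : ∀ x k, |pathStep g x k - A x| ≤ τ) (x y : Fin n → Bool) :
    |A x - A y| ≤ 2 * n * τ := by
  rcases n.eq_zero_or_pos with rfl | hn
  · simp [Subsingleton.elim x y]
  have hτ : 0 ≤ τ := (abs_nonneg _).trans (hA x ⟨0, hn⟩)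
  have hflip : ∀ x k, dist (A x) (A (flipOn {k} x)) ≤ 2 * τ := fun x k =>
    calc dist (A x) (A (flipOn {k} x))
        ≤ dist (A x) (pathStep g x k) + dist (pathStep g x k) (A (flipOn {k} x)) :=
          dist_triangle _ _ _
      _ ≤ τ + τ := by
          refine add_le_add ?_ ?_
          · rw [dist_comm]; exact hA x k
          · rw [← pathStep_flipOn_singleton]; exact hA _ k
      _ = 2 * τ := by ring
  have hcard : (hammingDist x y : ℝ) ≤ n := by
    exact_mod_cast hammingDist_le_card_fintype.trans_eq (Fintype.card_fin n)
  calc |A x - A y| ≤ 2 * τ * hammingDist x y := dist_le_mul_hammingDist hflip x y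
    _ ≤ 2 * τ * n := by gcongr
    _ = 2 * n * τ := by ring

lemma exists_scale_of_le_flipEnergy_univ (hn : 0 < n) {g : (Fin n → Bool) → X} {η : ℝ}
    (hg : (1 - η) * n * edgeEnergy g ≤ flipEnergy g univ) :
    ∃ s : ℝ,
      (∀ x i, dist (g x) (g (flipOn {i} x)) ≤ s + (2 * n + 1) * √(η * edgeEnergy g)) ∧
      ∀ x, n * (s - (2 * n + 1) * √(η * edgeEnergy g)) ≤ dist (g x) (g (flipOn univ x)) := by
  have hn' : (0 : ℝ) < n := by exact_mod_cast hn
  set τ := √(η * edgeEnergy g)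
  have hτ : 0 ≤ τ := Real.sqrt_nonneg _
  set A : (Fin n → Bool) → ℝ := fun x => dist (g x) (g (flipOn univ x)) / n
  have hstep : ∀ x k, |pathStep g x k - A x| ≤ τ := abs_pathStep_sub_le hn hg
  have hconst := abs_sub_le_of_abs_pathStep_sub_le hstep
  let o : Fin n → Bool := fun _ => false
  refine ⟨A o, fun x i => ?_, fun x => ?_⟩
  · rw [← pathStep_flipInit]
    linarith [(abs_le.1 (hstep (flipInit i x) i)).2, (abs_le.1 (hconst (flipInit i x) o)).2]
  · rw [← le_div_iff₀' hn']
    linarith [(abs_le.1 (hconst x o)).1]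

/-- The relative gain in the metric type inequality for maps on `2^n` that are not almost isometric
up to scaling with constant `D`. With this value the error `ρ` in
`exists_scale_of_le_flipEnergy_univ` satisfies `s + ρ ≤ (s - 2nρ) D`. -/
def typeGain (n : ℕ) (D : ℝ) : ℝ :=
  ((D - 1) / (D * (2 * n + 1) ^ 2)) ^ 2 / (n * 2 ^ n)

lemma typeGain_pos (hn : 0 < n) {D : ℝ} (hD : 1 < D) : 0 < typeGain n D := by
  have : 0 < D - 1 := sub_pos.2 hD
  unfold typeGain
  positivity

lemma typeGain_le_one (hn : 0 < n) {D : ℝ} (hD : 1 < D) : typeGain n D ≤ 1 := by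
  have hn' : (1 : ℝ) ≤ n := by exact_mod_cast hn
  have hratio : (D - 1) / (D * (2 * n + 1) ^ 2) ≤ 1 := by
    refine div_le_one_of_le₀ ?_ (by positivity)
    nlinarith [one_le_pow₀ (n := 2) (by linarith : (1 : ℝ) ≤ 2 * n + 1)]
  refine div_le_one_of_le₀ ?_ (by positivity)
  calc ((D - 1) / (D * (2 * n + 1) ^ 2)) ^ 2 ≤ 1 :=
        pow_le_one₀ (div_nonneg (by linarith) (by positivity)) hratio
    _ ≤ n * 2 ^ n := one_le_mul_of_one_le_of_one_le hn' (one_le_pow₀ one_le_two)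

lemma sqrt_typeGain_mul_edgeEnergy_le (hn : 0 < n) {D : ℝ} (hD : 1 < D) {g : (Fin n → Bool) → X}
    {c : ℝ} (hc : ∀ x i, dist (g x) (g (flipOn {i} x)) ≤ c) :
    √(typeGain n D * edgeEnergy g) ≤ (D - 1) / (D * (2 * n + 1) ^ 2) * c := by
  have hc₀ : 0 ≤ c := dist_nonneg.trans (hc (fun _ => false) ⟨0, hn⟩)
  have : 0 ≤ D - 1 := by linarith
  have hgain := (typeGain_pos hn hD).le
  refine Real.sqrt_le_iff.2 ⟨by positivity, ?_⟩
  calc typeGain n D * edgeEnergy g ≤ typeGain n D * (n * 2 ^ n * c ^ 2) := by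
        gcongr
        simpa using edgeEnergy_le hc
    _ = ((D - 1) / (D * (2 * n + 1) ^ 2) * c) ^ 2 := by
        rw [typeGain]
        field_simp

lemma exists_hammingBiLipschitz_of_lt_flipEnergy_univ (hn : 0 < n) {D : ℝ} (hD : 1 < D)
    {g : (Fin n → Bool) → X}
    (hg : (1 - typeGain n D) * n * edgeEnergy g < flipEnergy g univ) :
    ∃ a > 0, HammingBiLipschitz a (a * D) g := by
  have hpos : 0 < edgeEnergy g := by
    refine (edgeEnergy_nonneg g).lt_of_ne fun h0 => ?_
    have := flipEnergy_univ_le hn g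
    simp only [← h0, mul_zero] at hg this
    linarith
  obtain ⟨s, hedge, hanti⟩ := exists_scale_of_le_flipEnergy_univ hn hg.le
  have hτ := sqrt_typeGain_mul_edgeEnergy_le hn hD hedge
  have hτ₀ : 0 < √(typeGain n D * edgeEnergy g) :=
    Real.sqrt_pos.2 (mul_pos (typeGain_pos hn hD) hpos)
  set ρ := (2 * n + 1) * √(typeGain n D * edgeEnergy g) with hρ
  have hρ₀ : 0 < ρ := by positivity
  have hρs : ρ * (1 + 2 * n * D) ≤ (D - 1) * s := by
    rw [div_mul_eq_mul_div, le_div_iff₀ (by positivity)] at hτ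
    have : ρ * ((2 * n + 1) * D) ≤ (D - 1) * (s + ρ) := le_of_eq_of_le (by rw [hρ]; ring) hτ
    linarith
  have hbi := HammingBiLipschitz.of_edges_of_antipodes hρ₀.le hedge (by simpa using hanti)
  rw [Fintype.card_fin] at hbi
  refine ⟨s - 2 * n * ρ, ?_, hbi.lower, fun x y => (hbi.upper x y).trans ?_⟩
  · refine (mul_pos_iff_of_pos_left (sub_pos.2 hD)).1 ?_
    have : 0 < ρ * (1 + 2 * n) := by positivity
    linarith
  · gcongr
    linarith

end CubePath

/-! ### Subcubes -/

lemma exists_fibers_card_eq [Fintype κ] [DecidableEq κ] [Nonempty κ] {S : Finset ι} {s : ℕ}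
    (hS : #S = Fintype.card κ * s) : ∃ b : ι → κ, ∀ i, #{t ∈ S | b t = i} = s := by
  classical
  have e : S ≃ κ × Fin s := Fintype.equivOfCardEq (by simp [hS])
  refine ⟨fun t => if ht : t ∈ S then (e ⟨t, ht⟩).1 else Classical.arbitrary κ, fun i => ?_⟩
  refine Eq.trans (card_bij (s := (univ : Finset (Fin s))) (fun r _ => (e.symm (i, r) : ι))
    (fun r _ => by simp) (fun r _ r' _ h => by simpa using h) fun t ht => ?_).symm
    (by simp)
  obtain ⟨htS, rfl⟩ := mem_filter.1 ht
  exact ⟨(e ⟨t, htS⟩).2, mem_univ _, by simp [htS]⟩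

section Subcube

variable [DecidableEq ι] [DecidableEq κ]

/-- The subcube through `x` in which the bit `δ i` governs the block `{t ∈ S | b t = i}`. -/
def subcube (S : Finset ι) (b : ι → κ) (x : ι → Bool) (δ : κ → Bool) : ι → Bool :=
  flipOn {t ∈ S | δ (b t)} x

lemma subcube_flipOn (S : Finset ι) (b : ι → κ) (x : ι → Bool) (I : Finset κ) (δ : κ → Bool) :
    subcube S b x (flipOn I δ) = flipOn {t ∈ S | b t ∈ I} (subcube S b x δ) := by
  funext t
  by_cases hS : t ∈ S <;> by_cases hI : b t ∈ I <;> cases hδ : δ (b t) <;>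
    simp [subcube, flipOn, hS, hI, hδ]

variable [Fintype ι] [Fintype κ]

lemma isHammingDilation_subcube {S : Finset ι} {b : ι → κ} {s : ℕ}
    (hb : ∀ i, #{t ∈ S | b t = i} = s) (x : ι → Bool) : IsHammingDilation s (subcube S b x) := by
  intro δ δ'
  have hdiff : ({t | subcube S b x δ t ≠ subcube S b x δ' t} : Finset ι)
      = ({i | δ i ≠ δ' i} : Finset κ).biUnion fun i => {t ∈ S | b t = i} := by
    ext t
    by_cases hS : t ∈ S <;> cases hδ : δ (b t) <;> cases hδ' : δ' (b t) <;>
      simp [subcube, flipOn, hS, hδ, hδ']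
  rw [hammingDist, hdiff, card_biUnion, sum_congr rfl fun i _ => hb i, sum_const, smul_eq_mul,
    mul_comm, hammingDist]
  intro i _ j _ hij
  exact disjoint_filter.2 fun t _ hi hj => hij (hi.symm.trans hj)

variable [PseudoMetricSpace X]

lemma sum_flipEnergy_subcube (h : (ι → Bool) → X) (S : Finset ι) (b : ι → κ) (I : Finset κ) :
    ∑ x, flipEnergy (h ∘ subcube S b x) I
      = 2 ^ Fintype.card κ * flipEnergy h {t ∈ S | b t ∈ I} := by
  calc ∑ x, flipEnergy (h ∘ subcube S b x) I
      = ∑ δ : κ → Bool, ∑ x, dist (h (subcube S b x δ))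
          (h (flipOn {t ∈ S | b t ∈ I} (subcube S b x δ))) ^ 2 := by
        simp only [flipEnergy, Function.comp_apply, subcube_flipOn]
        exact sum_comm
    _ = ∑ _δ : κ → Bool, flipEnergy h {t ∈ S | b t ∈ I} :=
        sum_congr rfl fun δ _ => sum_comp_flipOn _ fun x =>
          dist (h x) (h (flipOn {t ∈ S | b t ∈ I} x)) ^ 2
    _ = 2 ^ Fintype.card κ * flipEnergy h {t ∈ S | b t ∈ I} := by simp

lemma flipEnergy_le_sum_blocks {h : (ι → Bool) → X} {S : Finset ι} {b : ι → κ} {C : ℝ}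
    (hC : ∀ x, flipEnergy (h ∘ subcube S b x) univ ≤ C * edgeEnergy (h ∘ subcube S b x)) :
    flipEnergy h S ≤ C * ∑ i, flipEnergy h {t ∈ S | b t = i} := by
  have hsum := sum_le_sum fun x (_ : x ∈ univ) => hC x
  simp only [edgeEnergy, ← mul_sum] at hsum
  rw [sum_comm] at hsum
  simp only [sum_flipEnergy_subcube, mem_univ, filter_true, mem_singleton, ← mul_sum] at hsum
  refine le_of_mul_le_mul_left ?_ (by positivity : (0 : ℝ) < 2 ^ Fintype.card κ)
  linarith

end Subcube

section Iteration

variable [Fintype ι] [PseudoMetricSpace X] {n : ℕ} {h : (ι → Bool) → X}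

lemma flipEnergy_le_of_card_eq_pow [DecidableEq ι] (hn : 0 < n) {θ m : ℝ} (hθ : 0 ≤ θ)
    (hm : ∀ i, flipEnergy h {i} ≤ m)
    (hgain : ∀ s > 0, ∀ f : (Fin n → Bool) → (ι → Bool), IsHammingDilation s f →
      flipEnergy (h ∘ f) univ ≤ θ * n * edgeEnergy (h ∘ f))
    {j : ℕ} {S : Finset ι} (hS : #S = n ^ j) :
    flipEnergy h S ≤ θ ^ j * (n ^ j) ^ 2 * m := by
  induction j generalizing S with
  | zero =>
    obtain ⟨i, rfl⟩ := card_eq_one.1 (hS.trans (pow_zero n))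
    simpa using hm i
  | succ j ih =>
    have : Nonempty (Fin n) := ⟨⟨0, hn⟩⟩
    obtain ⟨b, hb⟩ := exists_fibers_card_eq (κ := Fin n) (S := S) (s := n ^ j)
      (by rw [hS, Fintype.card_fin, pow_succ'])
    calc flipEnergy h S ≤ θ * n * ∑ i, flipEnergy h {t ∈ S | b t = i} :=
          flipEnergy_le_sum_blocks fun x =>
            hgain (n ^ j) (pow_pos hn j) _ (isHammingDilation_subcube hb x)
      _ ≤ θ * n * ∑ _i : Fin n, θ ^ j * (n ^ j) ^ 2 * m := by
          gcongr with i
          exact ih (hb i)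
      _ = θ ^ (j + 1) * (n ^ (j + 1)) ^ 2 * m := by
          rw [sum_const, card_univ, Fintype.card_fin, nsmul_eq_mul]
          ring

lemma exists_isHammingDilation_hammingBiLipschitz_comp (hn : 0 < n) {D : ℝ} (hD : 1 < D) {k : ℕ}
    (hι : Fintype.card ι = n ^ k) {α β : ℝ} (hα : 0 ≤ α) (hh : HammingBiLipschitz α β h)
    (hk : (1 - typeGain n D) ^ k * β ^ 2 < α ^ 2) :
    ∃ s > 0, ∃ f : (Fin n → Bool) → (ι → Bool), IsHammingDilation s f ∧
      ∃ a > 0, HammingBiLipschitz a (a * D) (h ∘ f) := by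
  classical
  by_contra! hno
  have hgain : ∀ s > 0, ∀ f : (Fin n → Bool) → (ι → Bool), IsHammingDilation s f →
      flipEnergy (h ∘ f) univ ≤ (1 - typeGain n D) * n * edgeEnergy (h ∘ f) := by
    intro s hs f hf
    by_contra! hlt
    obtain ⟨a, ha, hbi⟩ := exists_hammingBiLipschitz_of_lt_flipEnergy_univ hn hD hlt
    exact hno s hs f hf a ha hbi
  have hedge : ∀ i, flipEnergy h {i} ≤ 2 ^ Fintype.card ι * β ^ 2 := fun i =>
    flipEnergy_le fun x => by
      simpa [hammingDist_flipOn_right] using hh.upper x (flipOn {i} x)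
  have hanti : 2 ^ Fintype.card ι * (α * n ^ k) ^ 2 ≤ flipEnergy h univ :=
    le_flipEnergy (by positivity) fun x => by
      simpa [hammingDist_flipOn_right, hι] using hh.lower x (flipOn univ x)
  have hiter := flipEnergy_le_of_card_eq_pow hn (sub_nonneg.2 (typeGain_le_one hn hD)) hedge
    hgain (card_univ.trans hι)
  have hscale : (0 : ℝ) < 2 ^ Fintype.card ι * (n ^ k) ^ 2 := by positivity
  refine hk.not_ge (le_of_mul_le_mul_left ?_ hscale)
  linarith

end Iteration

/-! ### Normalized distances -/

lemma le_sSup_of_finite [Finite ι] [Finite κ] (φ : ι → κ → ℝ) (i : ι) (j : κ) :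
    φ i j ≤ sSup {r : ℝ | ∃ i j, r = φ i j} := by
  refine le_csSup (Set.Finite.bddAbove ?_) ⟨i, j, rfl⟩
  refine (Set.finite_range fun p : ι × κ => φ p.1 p.2).subset ?_
  rintro r ⟨i, j, rfl⟩
  exact ⟨(i, j), rfl⟩

section Normalized

variable {n : ℕ}

lemma hdist_eq_hammingDist_div (x y : Fin n → Bool) : hdist n x y = hammingDist x y / n := rfl

lemma hdist_pos {x y : Fin n → Bool} (hxy : x ≠ y) : 0 < hdist n x y := by
  obtain ⟨i, -⟩ := Function.ne_iff.1 hxy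
  exact div_pos (by exact_mod_cast hammingDist_pos.2 hxy) (by exact_mod_cast i.pos)

lemma natCast_mul_hdist (x y : Fin n → Bool) : n * hdist n x y = hammingDist x y := by
  rcases n.eq_zero_or_pos with rfl | hn
  · simp [Subsingleton.elim x y]
  · rw [hdist_eq_hammingDist_div, mul_div_cancel₀ _ (by positivity)]

lemma HammingBiLipschitz.hdist_bounds [PseudoMetricSpace X] {a b : ℝ} {g : (Fin n → Bool) → X}
    (hg : HammingBiLipschitz a b g) (x y : Fin n → Bool) :
    a * n * hdist n x y ≤ dist (g x) (g y) ∧ dist (g x) (g y) ≤ b * n * hdist n x y := by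
  simp only [mul_assoc, natCast_mul_hdist]
  exact ⟨hg.lower x y, hg.upper x y⟩

variable {Z : Type} [MetricSpace Z] {f : (Fin n → Bool) → Z}

lemma dist_le_cubeLip_mul_hdist (f : (Fin n → Bool) → Z) (x y : Fin n → Bool) :
    dist (f x) (f y) ≤ cubeLip f * hdist n x y := by
  rcases eq_or_ne x y with rfl | hxy
  · simp [hdist_eq_hammingDist_div]
  · exact (div_le_iff₀ (hdist_pos hxy)).1
      (le_sSup_of_finite (fun x y => dist (f x) (f y) / hdist n x y) x y)

lemma hdist_le_cubeCoLip_mul_dist (hf : Function.Injective f) (x y : Fin n → Bool) :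
    hdist n x y ≤ cubeCoLip f * dist (f x) (f y) := by
  rcases eq_or_ne x y with rfl | hxy
  · simp [hdist_eq_hammingDist_div]
  · exact (div_le_iff₀ (dist_pos.2 (hf.ne hxy))).1
      (le_sSup_of_finite (fun x y => hdist n x y / dist (f x) (f y)) x y)

lemma exists_hammingBiLipschitz_of_cubeDistortion_le (hn : 0 < n) (hf : Function.Injective f)
    {D : ℝ} (hD : cubeDistortion f ≤ D) (hD₀ : 0 < D) :
    ∃ b > 0, HammingBiLipschitz (b / D) b f := by
  have : (0 : ℝ) < n := by exact_mod_cast hn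
  have hLip : 0 < cubeLip f := by
    have : Nonempty (Fin n) := ⟨⟨0, hn⟩⟩
    obtain ⟨x, y, hxy⟩ := exists_pair_ne (Fin n → Bool)
    exact pos_of_mul_pos_left
      ((dist_pos.2 (hf.ne hxy)).trans_le (dist_le_cubeLip_mul_hdist f x y)) (hdist_pos hxy).le
  refine ⟨cubeLip f / n, by positivity, fun x y => ?_, fun x y => ?_⟩
  · have hlower : cubeLip f * hdist n x y ≤ D * dist (f x) (f y) :=
      calc cubeLip f * hdist n x y ≤ cubeLip f * (cubeCoLip f * dist (f x) (f y)) := by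
            gcongr
            exact hdist_le_cubeCoLip_mul_dist hf x y
        _ = cubeDistortion f * dist (f x) (f y) := by rw [cubeDistortion, mul_assoc]
        _ ≤ D * dist (f x) (f y) := by gcongr
    calc cubeLip f / n / D * hammingDist x y = cubeLip f * hdist n x y / D := by
          rw [hdist_eq_hammingDist_div]; ring
      _ ≤ dist (f x) (f y) := (div_le_iff₀' hD₀).2 hlower
  · calc dist (f x) (f y) ≤ cubeLip f * hdist n x y := dist_le_cubeLip_mul_hdist f x y
      _ = cubeLip f / n * hammingDist x y := by rw [hdist_eq_hammingDist_div]; ring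

end Normalized

/-! ### The factorization constant -/

/-- `c` belongs to the set whose supremum is `cConst 𝓕`. -/
def IsFactorizationConstant (𝓕 : Set MetricMap) (c : ℝ) : Prop :=
  0 < c ∧ ∀ D : ℝ, 1 < D → ∀ n : ℕ, 0 < n →
    ∃ G ∈ 𝓕, ∃ f : (Fin n → Bool) → G.X, ∃ a b : ℝ, 0 < a ∧ 0 < b ∧ a * c ≤ b ∧
      ∀ ε δ : Fin n → Bool,
        a / D * hdist n ε δ ≤ dist (f ε) (f δ) ∧
        dist (f ε) (f δ) ≤ a * D * hdist n ε δ ∧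
        b / D * hdist n ε δ ≤ dist (G.F (f ε)) (G.F (f δ)) ∧
        dist (G.F (f ε)) (G.F (f δ)) ≤ b * D * hdist n ε δ

section Factorization

variable {𝓕 : Set MetricMap} {K : ℝ}

lemma IsFactorizationConstant.le_four_mul (hK : 0 ≤ K)
    (hLip : ∀ G ∈ 𝓕, ∀ x y : G.X, dist (G.F x) (G.F y) ≤ K * dist x y) {c : ℝ}
    (hc : IsFactorizationConstant 𝓕 c) : c ≤ 4 * K := by
  obtain ⟨G, hG, f, a, b, ha, -, hab, hf⟩ := hc.2 2 one_lt_two 1 one_pos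
  let o : Fin 1 → Bool := fun _ => false
  let p : Fin 1 → Bool := fun _ => true
  obtain ⟨-, hX, hY, -⟩ := hf o p
  have hop : hdist 1 o p = 1 := by simp [hdist, o, p]
  rw [hop, mul_one] at hX hY
  have hb : b / 2 ≤ K * (a * 2) :=
    calc b / 2 ≤ dist (G.F (f o)) (G.F (f p)) := hY
      _ ≤ K * dist (f o) (f p) := hLip G hG _ _
      _ ≤ K * (a * 2) := by gcongr
  refine le_of_mul_le_mul_left ?_ ha
  linarith

lemma IsFactorizationConstant.of_hammingBiLipschitz {c : ℝ} (hc : 0 < c)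
    (h : ∀ D : ℝ, 1 < D → ∀ n : ℕ, 0 < n →
      ∃ G ∈ 𝓕, ∃ f : (Fin n → Bool) → G.X, ∃ a b : ℝ, 0 < a ∧ 0 < b ∧ a * c ≤ b ∧
        HammingBiLipschitz (a / D) (a * D) f ∧ HammingBiLipschitz (b / D) (b * D) (G.F ∘ f)) :
    IsFactorizationConstant 𝓕 c := by
  refine ⟨hc, fun D hD n hn => ?_⟩
  obtain ⟨G, hG, f, a, b, ha, hb, hab, hX, hY⟩ := h D hD n hn
  refine ⟨G, hG, f, a * n, b * n, by positivity, by positivity, ?_, fun x y => ?_⟩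
  · rw [mul_right_comm]
    gcongr
  · rw [mul_div_right_comm, mul_right_comm a, mul_div_right_comm, mul_right_comm b]
    exact and_assoc.1 ⟨hX.hdist_bounds x y, hY.hdist_bounds x y⟩

lemma isFactorizationConstant_of_coLipschitz (hK : 0 < K)
    (hLip : ∀ G ∈ 𝓕, ∀ x y : G.X, dist (G.F x) (G.F y) ≤ K * dist x y) {ϑ : ℝ} (hϑ : 0 < ϑ)
    (hyp : ∀ D : ℝ, 1 < D → ∀ l : ℕ, 0 < l →
      ∃ G ∈ 𝓕, ∃ h : (Fin l → Bool) → G.X, Function.Injective (G.F ∘ h) ∧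
        cubeDistortion (G.F ∘ h) ≤ D ∧
        ∀ x y, ϑ * dist (h x) (h y) ≤ dist (G.F (h x)) (G.F (h y))) :
    IsFactorizationConstant 𝓕 ϑ := by
  refine .of_hammingBiLipschitz hϑ fun D hD n hn => ?_
  have hD₀ : 0 < D := one_pos.trans hD
  have : Nonempty (Fin n) := ⟨⟨0, hn⟩⟩
  obtain ⟨k, hk⟩ : ∃ k : ℕ, (1 - typeGain n D) ^ k < (ϑ / (D * K)) ^ 2 :=
    exists_pow_lt_of_lt_one (by positivity) (sub_lt_self 1 (typeGain_pos hn hD))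
  obtain ⟨G, hG, h, hinj, hdistortion, hco⟩ := hyp D hD (n ^ k) (pow_pos hn k)
  obtain ⟨L, hL, hFh⟩ :=
    exists_hammingBiLipschitz_of_cubeDistortion_le (pow_pos hn k) hinj hdistortion hD₀
  have hh : HammingBiLipschitz (L / D / K) (L / ϑ) h :=
    hFh.of_comp hK (fun _ _ => hLip G hG _ _) hϑ hco
  obtain ⟨s, hs, f, hf, a, ha, hhf⟩ := exists_isHammingDilation_hammingBiLipschitz_comp hn hD
    (Fintype.card_fin _) (by positivity) hh (by
      calc (1 - typeGain n D) ^ k * (L / ϑ) ^ 2 < (ϑ / (D * K)) ^ 2 * (L / ϑ) ^ 2 := by gcongr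
        _ = (L / D / K) ^ 2 := by field_simp)
  have hFhf : HammingBiLipschitz (L / D * s) (L * s) (G.F ∘ h ∘ f) := hFh.comp_dilation hf
  have hab : a * ϑ ≤ L * s := by
    have hup := (hFhf.of_comp hK (fun _ _ => hLip G hG _ _) hϑ fun x y => hco (f x) (f y)).upper
    exact (le_div_iff₀ hϑ).1 (HammingBiLipschitz.lower_le_upper ⟨hhf.lower, hup⟩)
  exact ⟨G, hG, h ∘ f, a, L * s, ha, by positivity, hab,
    hhf.mono (div_le_self ha.le hD.le) le_rfl,
    hFhf.mono (mul_div_right_comm L _ D).le (le_mul_of_one_le_right (by positivity) hD.le)⟩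

end Factorization

/-- Lemma 5.1 (criterion for `c(𝓕) ≥ Θ`). -/
theorem cConst_criterion (𝓕 : Set MetricMap) (lam : ℝ) (hlam : 0 < lam)
    (hLip : ∀ G ∈ 𝓕, ∀ x y : G.X, dist (G.F x) (G.F y) ≤ lam * dist x y)
    (Θ : ℝ) (hΘ : 0 < Θ)
    (hyp : ∀ ϑ : ℝ, 0 < ϑ → ϑ < Θ → ∀ D : ℝ, 1 < D → ∀ l : ℕ, 0 < l →
      ∃ G ∈ 𝓕, ∃ h : (Fin l → Bool) → G.X,
        Function.Injective (fun ε => G.F (h ε)) ∧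
        cubeDistortion (fun ε => G.F (h ε)) ≤ D ∧
        ∀ ε₁ ε₂ : Fin l → Bool,
          ϑ * dist (h ε₁) (h ε₂) ≤ dist (G.F (h ε₁)) (G.F (h ε₂))) :
    Θ ≤ cConst 𝓕 := by
  have hmem : ∀ ϑ, 0 < ϑ → ϑ < Θ → ϑ ≤ cConst 𝓕 := fun ϑ hϑ hϑΘ =>
    le_csSup ⟨4 * lam, fun _ hc => IsFactorizationConstant.le_four_mul hlam.le hLip hc⟩
      (isFactorizationConstant_of_coLipschitz hlam hLip hϑ (hyp ϑ hϑ hϑΘ))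
  refine le_of_forall_lt_imp_le_of_dense fun ϑ hϑΘ => (le_max_left ϑ (Θ / 2)).trans ?_
  exact hmem _ (lt_max_of_lt_right (half_pos hΘ)) (max_lt hϑΘ (half_lt_self hΘ))
end
end
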